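/- arXiv:2306.04258 — 2 statements merged into one kernel-verified Lean document; each statement's English description precedes it below -/
import Mathlib

section
/- Let g > 0 and let x > y > z > 0 be real numbers. Put φ = arcsin(√(x²−y²)/x), m = (x²−z²)/(x²−y²) (note that m·sin²θ ≤ (x²−z²)/x² < 1 for all θ ∈ [0,φ], so the elliptic integrals below are defined), E₁ = E(φ|m), F₁ = F(φ|m), and P₁ = x·(x²−y²)^(3/2)·(x²−z²)²·(y²−z²)². Then the improper integral C₁(x,y,z) converges and C₁(x,y,z) = (4πg/P₁)·( y·z·√(x²−y²)·(x²−z²)·(z² − 2x² + y²) + x·((x⁴ + y²z²)(y² + z²) + x²(y⁴ − 6y²z² + z⁴))·E₁ − x·(y²−z²)·(y²z² + x²(y² − 2z²))·F₁ ). -/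
open Real MeasureTheory

/-- `C₁(x,y,z) = 2πg ∫₀^∞ s·((s+x²)(s+y²)(s+z²))^(−3/2) ds`. -/
noncomputable def riC1 (g x y z : ℝ) : ℝ :=
  2 * π * g * ∫ s in Set.Ioi (0:ℝ),
    s * ((s + x ^ 2) * (s + y ^ 2) * (s + z ^ 2)) ^ (-(3:ℝ)/2)

/-- Incomplete elliptic integral of the first kind, `F(φ|m)` (Mathematica convention). -/
noncomputable def ellF (φ m : ℝ) : ℝ :=
  ∫ θ in (0:ℝ)..φ, (1 - m * Real.sin θ ^ 2) ^ (-(1:ℝ)/2)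

/-- Incomplete elliptic integral of the second kind, `E(φ|m)` (Mathematica convention). -/
noncomputable def ellE (φ m : ℝ) : ℝ :=
  ∫ θ in (0:ℝ)..φ, (1 - m * Real.sin θ ^ 2) ^ ((1:ℝ)/2)

/-!
Partial fractions turn the integrand `s / ((s + x) (s + y) (s + z)) ^ (3 / 2)` (with `x`, `y`, `z`
in place of the squares) into a combination of the integrands of Carlson's `R_J(x, y, z, p)`,
`p ∈ {x, y, z}`. Writing `Q = (s + x) (s + y) (s + z)`, the boundary values of `1 / √Q` and `s / √Q`
give two linear relations between these three integrals and `R_F`. The substitution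
`sin² θ = (x - y) / (s + x)` identifies `F(φ|m)` and `E(φ|m)` with `R_F` and a combination of `R_F`
and `R_J(x, y, z, x)`, so the three `R_J` are found by solving a triangular linear system.
-/

open Set Filter Topology

/-- The integrand `1 / √((s + x) (s + y) (s + z))` of `2 R_F(x, y, z)`. -/
noncomputable def carlsonRFIntegrand (x y z s : ℝ) : ℝ :=
  1 / √((s + x) * (s + y) * (s + z))

lemma carlsonRFIntegrand_nonneg (x y z s : ℝ) : 0 ≤ carlsonRFIntegrand x y z s := by
  unfold carlsonRFIntegrand
  positivity

/-- Carlson's symmetric elliptic integral of the first kind, `R_F(x, y, z)`. -/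
noncomputable def carlsonRF (x y z : ℝ) : ℝ :=
  1 / 2 * ∫ s in Ioi 0, carlsonRFIntegrand x y z s

/-- The integrand of `(2 / 3) R_J(x, y, z, p)`. -/
noncomputable def carlsonRJIntegrand (x y z p s : ℝ) : ℝ :=
  carlsonRFIntegrand x y z s / (s + p)

/-- Carlson's symmetric elliptic integral of the third kind, `R_J(x, y, z, p)`. At `p = z` it is
Carlson's `R_D(x, y, z)`; keeping `p` separate makes the three `R_D` of a triple available without
permuting the arguments. -/
noncomputable def carlsonRJ (x y z p : ℝ) : ℝ :=
  3 / 2 * ∫ s in Ioi 0, carlsonRJIntegrand x y z p s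

section

variable {x y z p s : ℝ}

/-! ### Convergence -/

lemma integrableOn_carlsonRFIntegrand (hx : 0 < x) (hy : 0 < y) (hz : 0 < z) :
    IntegrableOn (carlsonRFIntegrand x y z) (Ioi 0) := by
  obtain ⟨c, hc, hcx, hcy, hcz⟩ : ∃ c, 0 < c ∧ c ≤ x ∧ c ≤ y ∧ c ≤ z :=
    ⟨min x (min y z), by positivity, by simp, by simp, by simp⟩
  have hdom : IntegrableOn (fun s : ℝ ↦ (s + c) ^ (-(3 : ℝ) / 2)) (Ioi 0) :=
    integrableOn_add_rpow_Ioi_of_lt (by norm_num) (by simpa)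
  have hmeas : Measurable (carlsonRFIntegrand x y z) := by
    unfold carlsonRFIntegrand
    fun_prop
  refine hdom.mono' hmeas.aestronglyMeasurable ?_
  filter_upwards [ae_restrict_mem measurableSet_Ioi] with s (hs : 0 < s)
  have hcube : (s + c) ^ 3 ≤ (s + x) * (s + y) * (s + z) := by
    rw [pow_three']
    gcongr
  calc ‖carlsonRFIntegrand x y z s‖
      = 1 / √((s + x) * (s + y) * (s + z)) := norm_of_nonneg (carlsonRFIntegrand_nonneg x y z s)
    _ ≤ 1 / √((s + c) ^ 3) := by gcongr
    _ = (s + c) ^ (-(3 : ℝ) / 2) := by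
      rw [neg_div, rpow_neg (by positivity), rpow_div_two_eq_sqrt _ (by positivity), rpow_ofNat,
        one_div, sqrt_eq_rpow, sqrt_eq_rpow, ← rpow_pow_comm (by positivity)]

lemma integrableOn_carlsonRJIntegrand (hx : 0 < x) (hy : 0 < y) (hz : 0 < z) (hp : 0 < p) :
    IntegrableOn (carlsonRJIntegrand x y z p) (Ioi 0) := by
  have hbound (s : ℝ) (hs : s ∈ Ioi 0) : ‖(s + p)⁻¹‖ ≤ p⁻¹ := by
    have hs : 0 < s := hs
    rw [Real.norm_of_nonneg (by positivity)]
    gcongr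
    linarith
  exact (integrableOn_carlsonRFIntegrand hx hy hz).mul_bdd
    (by fun_prop : Measurable fun s : ℝ ↦ (s + p)⁻¹).aestronglyMeasurable
    ((ae_restrict_mem measurableSet_Ioi).mono hbound)

lemma integrableOn_linearCombination_carlsonRJIntegrand (hx : 0 < x) (hy : 0 < y) (hz : 0 < z)
    (a b c : ℝ) :
    IntegrableOn (fun s ↦ a * carlsonRJIntegrand x y z x s + b * carlsonRJIntegrand x y z y s
      + c * carlsonRJIntegrand x y z z s) (Ioi 0) :=
  have hJ {p : ℝ} (hp : 0 < p) := integrableOn_carlsonRJIntegrand hx hy hz hp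
  (((hJ hx).const_mul a).add ((hJ hy).const_mul b)).add ((hJ hz).const_mul c)

lemma integral_linearCombination_carlsonRJIntegrand (hx : 0 < x) (hy : 0 < y) (hz : 0 < z)
    (a b c : ℝ) :
    ∫ s in Ioi 0, (a * carlsonRJIntegrand x y z x s + b * carlsonRJIntegrand x y z y s
      + c * carlsonRJIntegrand x y z z s) =
    2 / 3 * (a * carlsonRJ x y z x + b * carlsonRJ x y z y + c * carlsonRJ x y z z) := by
  have hJ {p : ℝ} (hp : 0 < p) (c : ℝ) : IntegrableOn (c * carlsonRJIntegrand x y z p ·) (Ioi 0) :=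
    (integrableOn_carlsonRJIntegrand hx hy hz hp).const_mul c
  rw [integral_add ((hJ hx a).fun_add (hJ hy b)) (hJ hz c), integral_add (hJ hx a) (hJ hy b)]
  simp only [integral_const_mul, carlsonRJ]
  ring

/-! ### Linear relations between Carlson integrals -/

lemma hasDerivAt_carlsonRFIntegrand (hx : 0 < s + x) (hy : 0 < s + y) (hz : 0 < s + z) :
    HasDerivAt (carlsonRFIntegrand x y z)
      (-(1 / 2) * (carlsonRJIntegrand x y z x s + carlsonRJIntegrand x y z y s
        + carlsonRJIntegrand x y z z s)) s := by
  have hQ : 0 < (s + x) * (s + y) * (s + z) := by positivity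
  have hlin (a : ℝ) : HasDerivAt (fun s ↦ s + a) 1 s := (hasDerivAt_id s).add_const a
  have hderiv := ((((hlin x).mul (hlin y)).mul (hlin z)).sqrt hQ.ne').inv (sqrt_pos.2 hQ).ne'
  unfold carlsonRJIntegrand carlsonRFIntegrand
  simp only [one_div]
  refine hderiv.congr_deriv ?_
  simp only [Pi.mul_apply, sq_sqrt hQ.le]
  field_simp

lemma hasDerivAt_mul_carlsonRFIntegrand (hx : 0 < s + x) (hy : 0 < s + y) (hz : 0 < s + z) :
    HasDerivAt (fun s ↦ s * carlsonRFIntegrand x y z s)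
      (1 / 2 * (x * carlsonRJIntegrand x y z x s + y * carlsonRJIntegrand x y z y s
        + z * carlsonRJIntegrand x y z z s - carlsonRFIntegrand x y z s)) s := by
  refine ((hasDerivAt_id s).mul (hasDerivAt_carlsonRFIntegrand hx hy hz)).congr_deriv ?_
  simp only [id, carlsonRJIntegrand]
  field_simp
  ring

lemma tendsto_mul_carlsonRFIntegrand (hx : 0 ≤ x) (hy : 0 ≤ y) (hz : 0 ≤ z) :
    Tendsto (fun s ↦ s * carlsonRFIntegrand x y z s) atTop (𝓝 0) := by
  have hinv : Tendsto (fun s : ℝ ↦ 1 / √s) atTop (𝓝 0) :=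
    tendsto_const_nhds.div_atTop tendsto_sqrt_atTop
  refine squeeze_zero' ?_ ?_ hinv <;> filter_upwards [eventually_gt_atTop 0] with s hs
  · exact mul_nonneg hs.le (carlsonRFIntegrand_nonneg x y z s)
  have hcube : s ^ 2 * s ≤ (s + x) * (s + y) * (s + z) := by
    rw [sq]
    gcongr <;> linarith
  calc s * carlsonRFIntegrand x y z s ≤ s * (1 / √(s ^ 2 * s)) := by
        unfold carlsonRFIntegrand
        gcongr
    _ = 1 / √s := by
        rw [sqrt_mul (by positivity), sqrt_sq hs.le]
        field_simp

lemma tendsto_carlsonRFIntegrand (hx : 0 ≤ x) (hy : 0 ≤ y) (hz : 0 ≤ z) :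
    Tendsto (carlsonRFIntegrand x y z) atTop (𝓝 0) := by
  have hlim := (tendsto_mul_carlsonRFIntegrand hx hy hz).mul tendsto_inv_atTop_zero
  rw [mul_zero] at hlim
  refine hlim.congr' ?_
  filter_upwards [eventually_ne_atTop 0] with s hs
  field_simp

theorem carlsonRJ_add_carlsonRJ_add_carlsonRJ (hx : 0 < x) (hy : 0 < y) (hz : 0 < z) :
    carlsonRJ x y z x + carlsonRJ x y z y + carlsonRJ x y z z = 3 / √(x * y * z) := by
  have hderiv (s : ℝ) (hs : 0 ≤ s) := hasDerivAt_carlsonRFIntegrand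
    (add_pos_of_nonneg_of_pos hs hx) (add_pos_of_nonneg_of_pos hs hy)
    (add_pos_of_nonneg_of_pos hs hz)
  have hint := integrableOn_linearCombination_carlsonRJIntegrand hx hy hz 1 1 1
  have heval := integral_linearCombination_carlsonRJIntegrand hx hy hz 1 1 1
  simp only [one_mul] at hint heval
  have hFTC := integral_Ioi_of_hasDerivAt_of_tendsto
    (hderiv 0 le_rfl).continuousAt.continuousWithinAt (fun s hs ↦ hderiv s (le_of_lt hs))
    (hint.const_mul _) (tendsto_carlsonRFIntegrand hx.le hy.le hz.le)
  rw [integral_const_mul, heval] at hFTC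
  simp only [carlsonRFIntegrand, zero_add] at hFTC
  linear_combination -3 * hFTC

theorem mul_carlsonRJ_add_mul_carlsonRJ_add_mul_carlsonRJ
    (hx : 0 < x) (hy : 0 < y) (hz : 0 < z) :
    x * carlsonRJ x y z x + y * carlsonRJ x y z y + z * carlsonRJ x y z z =
      3 * carlsonRF x y z := by
  have hderiv (s : ℝ) (hs : 0 ≤ s) := hasDerivAt_mul_carlsonRFIntegrand
    (add_pos_of_nonneg_of_pos hs hx) (add_pos_of_nonneg_of_pos hs hy)
    (add_pos_of_nonneg_of_pos hs hz)
  have hJ := integrableOn_linearCombination_carlsonRJIntegrand hx hy hz x y z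
  have hF := integrableOn_carlsonRFIntegrand hx hy hz
  have hFTC := integral_Ioi_of_hasDerivAt_of_tendsto
    (hderiv 0 le_rfl).continuousAt.continuousWithinAt (fun s hs ↦ hderiv s (le_of_lt hs))
    ((hJ.sub hF).const_mul _) (tendsto_mul_carlsonRFIntegrand hx.le hy.le hz.le)
  rw [integral_const_mul, integral_sub hJ hF,
    integral_linearCombination_carlsonRJIntegrand hx hy hz] at hFTC
  simp only [carlsonRF]
  linear_combination 3 * hFTC

/-! ### Partial fractions -/

lemma mul_cubic_rpow_eq_linearCombination_carlsonRJIntegrand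
    (hx : 0 < s + x) (hy : 0 < s + y) (hz : 0 < s + z)
    (hxy : x ≠ y) (hxz : x ≠ z) (hyz : y ≠ z) :
    s * ((s + x) * (s + y) * (s + z)) ^ (-(3 : ℝ) / 2) =
      -x / ((x - y) * (x - z)) * carlsonRJIntegrand x y z x s
        + y / ((x - y) * (y - z)) * carlsonRJIntegrand x y z y s
        + -z / ((x - z) * (y - z)) * carlsonRJIntegrand x y z z s := by
  have hQ : 0 < (s + x) * (s + y) * (s + z) := by positivity
  have hrpow : ((s + x) * (s + y) * (s + z)) ^ (-(3 : ℝ) / 2) =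
      1 / (((s + x) * (s + y) * (s + z)) * √((s + x) * (s + y) * (s + z))) := by
    rw [neg_div, rpow_neg hQ.le, rpow_div_two_eq_sqrt _ hQ.le, rpow_ofNat, pow_succ, sq_sqrt hQ.le,
      one_div]
  rw [hrpow]
  unfold carlsonRJIntegrand carlsonRFIntegrand
  have := sub_ne_zero.2 hxy
  have := sub_ne_zero.2 hxz
  have := sub_ne_zero.2 hyz
  field_simp
  ring

theorem integrableOn_mul_cubic_rpow (hx : 0 < x) (hy : 0 < y) (hz : 0 < z)
    (hxy : x ≠ y) (hxz : x ≠ z) (hyz : y ≠ z) :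
    IntegrableOn (fun s : ℝ ↦ s * ((s + x) * (s + y) * (s + z)) ^ (-(3 : ℝ) / 2)) (Ioi 0) :=
  (integrableOn_linearCombination_carlsonRJIntegrand hx hy hz _ _ _).congr_fun
    (fun s (hs : 0 < s) ↦ (mul_cubic_rpow_eq_linearCombination_carlsonRJIntegrand
      (by positivity) (by positivity) (by positivity) hxy hxz hyz).symm) measurableSet_Ioi

theorem integral_mul_cubic_rpow (hx : 0 < x) (hy : 0 < y) (hz : 0 < z)
    (hxy : x ≠ y) (hxz : x ≠ z) (hyz : y ≠ z) :
    ∫ s in Ioi 0, s * ((s + x) * (s + y) * (s + z)) ^ (-(3 : ℝ) / 2) =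
      2 / 3 * (-x / ((x - y) * (x - z)) * carlsonRJ x y z x
        + y / ((x - y) * (y - z)) * carlsonRJ x y z y
        + -z / ((x - z) * (y - z)) * carlsonRJ x y z z) := by
  rw [← integral_linearCombination_carlsonRJIntegrand hx hy hz]
  exact setIntegral_congr_fun measurableSet_Ioi fun s (hs : 0 < s) ↦
    mul_cubic_rpow_eq_linearCombination_carlsonRJIntegrand
      (by positivity) (by positivity) (by positivity) hxy hxz hyz

/-! ### Legendre's integrals in Carlson form -/

lemma mem_Ioo_arcsin_sqrt_iff {a θ : ℝ} :
    θ ∈ Ioo 0 (arcsin √a) ↔ θ ∈ Ioo 0 (π / 2) ∧ sin θ ^ 2 < a := by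
  have hiff (hθ : θ ∈ Ioo 0 (π / 2)) : θ < arcsin √a ↔ sin θ ^ 2 < a := by
    rw [lt_arcsin_iff_sin_lt' ⟨by linarith [hθ.1, pi_pos], hθ.2⟩,
      lt_sqrt (sin_nonneg_of_nonneg_of_le_pi hθ.1.le (by linarith [hθ.2, pi_pos]))]
  constructor
  · rintro ⟨hθ₀, hθ⟩
    have hmem : θ ∈ Ioo 0 (π / 2) := ⟨hθ₀, hθ.trans_le (arcsin_le_pi_div_two _)⟩
    exact ⟨hmem, (hiff hmem).1 hθ⟩
  · rintro ⟨hmem, hθ⟩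
    exact ⟨hmem.1, (hiff hmem).2 hθ⟩

lemma sin_pos_of_mem_Ioo_arcsin_sqrt {a θ : ℝ} (hθ : θ ∈ Ioo 0 (arcsin √a)) : 0 < sin θ :=
  sin_pos_of_pos_of_lt_pi hθ.1 (by linarith [hθ.2, arcsin_le_pi_div_two √a, pi_pos])

lemma bijOn_div_sin_sq_sub (hy : 0 ≤ y) (hyx : y < x) :
    BijOn (fun θ ↦ (x - y) / sin θ ^ 2 - x) (Ioo 0 (arcsin √((x - y) / x))) (Ioi 0) := by
  have hx : 0 < x := hy.trans_lt hyx
  have hxy : 0 < x - y := sub_pos.2 hyx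
  have hsq {s : ℝ} (hs : 0 < s) : sin (arcsin √((x - y) / (s + x))) ^ 2 = (x - y) / (s + x) := by
    have hle : √((x - y) / (s + x)) ≤ 1 :=
      sqrt_le_one.2 <| (div_le_one (by positivity)).2 (by linarith)
    rw [sin_arcsin (by linarith [sqrt_nonneg ((x - y) / (s + x))]) hle, sq_sqrt (by positivity)]
  have hinv : InvOn (fun s ↦ arcsin √((x - y) / (s + x))) (fun θ ↦ (x - y) / sin θ ^ 2 - x)
      (Ioo 0 (arcsin √((x - y) / x))) (Ioi 0) := by
    refine ⟨fun θ hθ ↦ ?_, fun s (hs : 0 < s) ↦ ?_⟩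
    · obtain ⟨hmem, -⟩ := mem_Ioo_arcsin_sqrt_iff.1 hθ
      have := sin_pos_of_mem_Ioo_arcsin_sqrt hθ
      simp only [sub_add_cancel, div_div_cancel₀ hxy.ne', sqrt_sq this.le]
      exact arcsin_sin (by linarith [hmem.1, pi_pos]) hmem.2.le
    · simp only [hsq hs, div_div_cancel₀ hxy.ne', add_sub_cancel_right]
  refine hinv.bijOn (fun θ hθ ↦ ?_) (fun s (hs : 0 < s) ↦ ?_)
  · obtain ⟨-, hlt⟩ := mem_Ioo_arcsin_sqrt_iff.1 hθ
    have := sin_pos_of_mem_Ioo_arcsin_sqrt hθ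
    exact sub_pos.2 <| (lt_div_comm₀ (by positivity) hx).1 hlt
  · have hle : √((x - y) / x) ≤ 1 := sqrt_le_one.2 <| (div_le_one hx).2 (by linarith)
    have hlt : √((x - y) / (s + x)) < √((x - y) / x) := by
      gcongr
      linarith
    refine ⟨arcsin_pos.2 (by positivity), arcsin_lt_arcsin ?_ hlt hle⟩
    linarith [sqrt_nonneg ((x - y) / (s + x))]

lemma hasDerivAt_div_sin_sq_sub (a b : ℝ) {θ : ℝ} (hθ : sin θ ≠ 0) :
    HasDerivAt (fun θ ↦ a / sin θ ^ 2 - b) (-(2 * a * cos θ / sin θ ^ 3)) θ := by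
  refine ((((hasDerivAt_sin θ).fun_pow 2).fun_inv (pow_ne_zero 2 hθ)).const_mul a).sub_const b
    |>.congr_deriv ?_
  push_cast
  field_simp

theorem integral_comp_sin_sq_eq_integral_Ioi (hy : 0 ≤ y) (hyx : y < x) (f : ℝ → ℝ) :
    ∫ θ in 0..arcsin √((x - y) / x), f (sin θ ^ 2) =
      √(x - y) / 2 * ∫ s in Ioi 0, f ((x - y) / (s + x)) / ((s + x) * √(s + y)) := by
  have hxy : 0 < x - y := sub_pos.2 hyx
  have hbij := bijOn_div_sin_sq_sub hy hyx
  rw [← hbij.image_eq, integral_image_eq_integral_abs_deriv_smul measurableSet_Ioo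
      (fun θ hθ ↦ (hasDerivAt_div_sin_sq_sub _ _
        (sin_pos_of_mem_Ioo_arcsin_sqrt hθ).ne').hasDerivWithinAt) hbij.injOn,
    intervalIntegral.integral_of_le (arcsin_nonneg.2 (sqrt_nonneg _)), integral_Ioc_eq_integral_Ioo,
    ← integral_const_mul]
  refine setIntegral_congr_fun measurableSet_Ioo fun θ hθ ↦ ?_
  have hs := sin_pos_of_mem_Ioo_arcsin_sqrt hθ
  have hc : 0 < cos θ :=
    cos_pos_of_mem_Ioo ⟨by linarith [hθ.1, pi_pos], (mem_Ioo_arcsin_sqrt_iff.1 hθ).1.2⟩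
  have hsqrt : √((x - y) / sin θ ^ 2 - x + y) = √(x - y) * cos θ / sin θ := by
    rw [sqrt_eq_iff_mul_self_eq_of_pos (by positivity)]
    field_simp
    rw [sq_sqrt hxy.le, cos_sq']
    ring
  simp only [smul_eq_mul, abs_neg, sub_add_cancel, div_div_cancel₀ hxy.ne', hsqrt]
  rw [abs_of_pos (by positivity)]
  field_simp

lemma one_sub_mul_div_add (hxy : x ≠ y) (hsx : s + x ≠ 0) :
    1 - (x - z) / (x - y) * ((x - y) / (s + x)) = (s + z) / (s + x) := by
  have := sub_ne_zero.2 hxy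
  field_simp
  ring

theorem ellF_eq_carlsonRF (hy : 0 ≤ y) (hz : 0 ≤ z) (hyx : y < x) :
    ellF (arcsin √((x - y) / x)) ((x - z) / (x - y)) = √(x - y) * carlsonRF x y z := by
  have hx : 0 < x := hy.trans_lt hyx
  have hintegrand : ∀ s ∈ Ioi 0, (1 - (x - z) / (x - y) * ((x - y) / (s + x))) ^ (-(1 : ℝ) / 2) /
      ((s + x) * √(s + y)) = carlsonRFIntegrand x y z s := fun s (hs : 0 < s) ↦ by
    have hrpow : ((s + z) / (s + x)) ^ (-(1 : ℝ) / 2) = √(s + x) / √(s + z) := by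
      rw [neg_div, rpow_neg (by positivity), ← sqrt_eq_rpow, sqrt_div (by positivity), inv_div]
    rw [one_sub_mul_div_add hyx.ne' (by positivity), hrpow, carlsonRFIntegrand,
      sqrt_mul (by positivity), sqrt_mul (by positivity)]
    field_simp
    exact sq_sqrt (by positivity)
  rw [ellF, integral_comp_sin_sq_eq_integral_Ioi hy hyx
    (fun u ↦ (1 - (x - z) / (x - y) * u) ^ (-(1 : ℝ) / 2)),
    setIntegral_congr_fun measurableSet_Ioi hintegrand, carlsonRF]
  ring

theorem ellE_eq_carlsonRF_sub_carlsonRJ (hy : 0 < y) (hz : 0 < z) (hyx : y < x) :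
    ellE (arcsin √((x - y) / x)) ((x - z) / (x - y)) =
      √(x - y) * (carlsonRF x y z - (x - z) / 3 * carlsonRJ x y z x) := by
  have hx : 0 < x := hy.trans hyx
  have hintegrand : ∀ s ∈ Ioi 0, (1 - (x - z) / (x - y) * ((x - y) / (s + x))) ^ ((1 : ℝ) / 2) /
      ((s + x) * √(s + y)) = carlsonRFIntegrand x y z s - (x - z) * carlsonRJIntegrand x y z x s :=
    fun s (hs : 0 < s) ↦ by
    rw [one_sub_mul_div_add hyx.ne' (by positivity), ← sqrt_eq_rpow, sqrt_div (by positivity),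
      carlsonRJIntegrand, carlsonRFIntegrand, sqrt_mul (by positivity), sqrt_mul (by positivity)]
    field_simp
    rw [sq_sqrt (by positivity)]
    ring
  have hF := integrableOn_carlsonRFIntegrand hx hy hz
  have hJ := (integrableOn_carlsonRJIntegrand hx hy hz hx).const_mul (x - z)
  rw [ellE, integral_comp_sin_sq_eq_integral_Ioi hy.le hyx
    (fun u ↦ (1 - (x - z) / (x - y) * u) ^ ((1 : ℝ) / 2)),
    setIntegral_congr_fun measurableSet_Ioi hintegrand, integral_sub hF hJ, integral_const_mul,
    carlsonRF, carlsonRJ]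
  ring

/-! ### The closed form -/

theorem integral_mul_cubic_rpow_eq_ellE_ellF (hy : 0 < y) (hyx : y < x) (hz : 0 < z) (hzx : z ≠ x)
    (hzy : z ≠ y) :
    ∫ s in Ioi 0, s * ((s + x) * (s + y) * (s + z)) ^ (-(3 : ℝ) / 2) =
      2 / ((x - y) * (x - z) ^ 2 * (y - z) ^ 2) *
        ((x - z) * (z - 2 * x + y) * (y * z / √(x * y * z))
          + ((x ^ 2 + y * z) * (y + z) + x * (y ^ 2 - 6 * y * z + z ^ 2)) *
              (ellE (arcsin √((x - y) / x)) ((x - z) / (x - y)) / √(x - y))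
          - (y - z) * (y * z + x * (y - 2 * z)) *
              (ellF (arcsin √((x - y) / x)) ((x - z) / (x - y)) / √(x - y))) := by
  have hx : 0 < x := hy.trans hyx
  have hk : √(x - y) ≠ 0 := (sqrt_pos.2 (sub_pos.2 hyx)).ne'
  have hxy : x - y ≠ 0 := sub_ne_zero.2 hyx.ne'
  have hxz : x - z ≠ 0 := sub_ne_zero.2 hzx.symm
  have hyz : y - z ≠ 0 := sub_ne_zero.2 hzy.symm
  have hsum := carlsonRJ_add_carlsonRJ_add_carlsonRJ hx hy hz
  have hwsum := mul_carlsonRJ_add_mul_carlsonRJ_add_mul_carlsonRJ hx hy hz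
  have hJy : carlsonRJ x y z y =
      (3 * carlsonRF x y z - (x - z) * carlsonRJ x y z x - z * (3 / √(x * y * z))) / (y - z) := by
    rw [eq_div_iff hyz]
    linear_combination hwsum - z * hsum
  have hJz : carlsonRJ x y z z =
      (y * (3 / √(x * y * z)) - 3 * carlsonRF x y z + (x - y) * carlsonRJ x y z x) / (y - z) := by
    rw [eq_div_iff hyz]
    linear_combination y * hsum - hwsum
  rw [integral_mul_cubic_rpow hx hy hz hyx.ne' hzx.symm hzy.symm, hJy, hJz,
    ellF_eq_carlsonRF hy.le hz.le hyx, ellE_eq_carlsonRF_sub_carlsonRJ hy hz hyx,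
    mul_div_cancel_left₀ _ hk, mul_div_cancel_left₀ _ hk]
  field_simp
  ring

end

theorem stmt_0_general (g x y z : ℝ) (hy : 0 < y) (hyx : y < x) (hz : 0 < z) (hzx : z ≠ x)
    (hzy : z ≠ y) :
    IntegrableOn
      (fun s : ℝ => s * ((s + x ^ 2) * (s + y ^ 2) * (s + z ^ 2)) ^ (-(3:ℝ)/2))
      (Set.Ioi 0) ∧
    riC1 g x y z =
      4 * π * g /
          (x * (x ^ 2 - y ^ 2) ^ ((3:ℝ)/2) * (x ^ 2 - z ^ 2) ^ 2 * (y ^ 2 - z ^ 2) ^ 2) *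
        (y * z * Real.sqrt (x ^ 2 - y ^ 2) * (x ^ 2 - z ^ 2) * (z ^ 2 - 2 * x ^ 2 + y ^ 2)
          + x * ((x ^ 4 + y ^ 2 * z ^ 2) * (y ^ 2 + z ^ 2)
                  + x ^ 2 * (y ^ 4 - 6 * y ^ 2 * z ^ 2 + z ^ 4)) *
              ellE (Real.arcsin (Real.sqrt (x ^ 2 - y ^ 2) / x))
                ((x ^ 2 - z ^ 2) / (x ^ 2 - y ^ 2))
          - x * (y ^ 2 - z ^ 2) * (y ^ 2 * z ^ 2 + x ^ 2 * (y ^ 2 - 2 * z ^ 2)) *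
              ellF (Real.arcsin (Real.sqrt (x ^ 2 - y ^ 2) / x))
                ((x ^ 2 - z ^ 2) / (x ^ 2 - y ^ 2))) := by
  have hx : 0 < x := hy.trans hyx
  have hyx' : y ^ 2 < x ^ 2 := by gcongr
  have hzx' : z ^ 2 ≠ x ^ 2 := (pow_left_inj₀ hz.le hx.le two_ne_zero).not.2 hzx
  have hzy' : z ^ 2 ≠ y ^ 2 := (pow_left_inj₀ hz.le hy.le two_ne_zero).not.2 hzy
  refine ⟨integrableOn_mul_cubic_rpow (by positivity) (by positivity) (by positivity) hyx'.ne'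
    hzx'.symm hzy'.symm, ?_⟩
  have hk : 0 < √(x ^ 2 - y ^ 2) := sqrt_pos.2 (sub_pos.2 hyx')
  have hrpow : (x ^ 2 - y ^ 2) ^ ((3 : ℝ) / 2) = (x ^ 2 - y ^ 2) * √(x ^ 2 - y ^ 2) := by
    rw [rpow_div_two_eq_sqrt _ (sub_pos.2 hyx').le, rpow_ofNat, pow_succ,
      sq_sqrt (sub_pos.2 hyx').le]
  have hsqrt : √(x ^ 2 * y ^ 2 * z ^ 2) = x * y * z := by
    rw [← mul_pow, ← mul_pow, sqrt_sq (by positivity)]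
  have hamplitude : √((x ^ 2 - y ^ 2) / x ^ 2) = √(x ^ 2 - y ^ 2) / x := by
    rw [sqrt_div' _ (by positivity), sqrt_sq hx.le]
  rw [riC1, integral_mul_cubic_rpow_eq_ellE_ellF (by positivity) hyx' (by positivity) hzx' hzy',
    hamplitude, hsqrt, hrpow]
  have := sub_ne_zero.2 hyx'.ne'
  have := sub_ne_zero.2 hzx'.symm
  have := sub_ne_zero.2 hzy'.symm
  field_simp
  ring

/-- For `g > 0` and `x > y > z > 0`, the improper integral defining
`C₁(x,y,z)` converges, and with `φ = arcsin(√(x²−y²)/x)`, `m = (x²−z²)/(x²−y²)`,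
`E₁ = E(φ|m)`, `F₁ = F(φ|m)` and `P₁ = x(x²−y²)^{3/2}(x²−z²)²(y²−z²)²` one has the closed
form of Lemma C.1. -/
theorem stmt_0 (g x y z : ℝ) (hg : 0 < g) (hyx : y < x) (hzy : z < y) (hz : 0 < z) :
    IntegrableOn
      (fun s : ℝ => s * ((s + x ^ 2) * (s + y ^ 2) * (s + z ^ 2)) ^ (-(3:ℝ)/2))
      (Set.Ioi 0) ∧
    riC1 g x y z =
      4 * π * g /
          (x * (x ^ 2 - y ^ 2) ^ ((3:ℝ)/2) * (x ^ 2 - z ^ 2) ^ 2 * (y ^ 2 - z ^ 2) ^ 2) *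
        (y * z * Real.sqrt (x ^ 2 - y ^ 2) * (x ^ 2 - z ^ 2) * (z ^ 2 - 2 * x ^ 2 + y ^ 2)
          + x * ((x ^ 4 + y ^ 2 * z ^ 2) * (y ^ 2 + z ^ 2)
                  + x ^ 2 * (y ^ 4 - 6 * y ^ 2 * z ^ 2 + z ^ 4)) *
              ellE (Real.arcsin (Real.sqrt (x ^ 2 - y ^ 2) / x))
                ((x ^ 2 - z ^ 2) / (x ^ 2 - y ^ 2))
          - x * (y ^ 2 - z ^ 2) * (y ^ 2 * z ^ 2 + x ^ 2 * (y ^ 2 - 2 * z ^ 2)) *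
              ellF (Real.arcsin (Real.sqrt (x ^ 2 - y ^ 2) / x))
                ((x ^ 2 - z ^ 2) / (x ^ 2 - y ^ 2))) :=
  stmt_0_general g x y z (hz.trans hzy) hyx hz (hzy.trans hyx).ne hzy.ne
end

section
/- Let (b₁,b₂) ∈ B with b₃ = (b₁b₂)^(−1), and assume 0 ≤ G^S₊(b₁,b₂,b₃) < G^S₋(b₁,b₂,b₃) (the counter-parallel S₂ regime). Put N₊ = N^S₊(b₁,b₂,b₃) and N₋ = N^S₋(b₁,b₂,b₃) (so N₋ < 0), and set L = N₊, R = −N₋. Then the point p* = (b₁, b₂, 0, 0, 0, N₊, 0, 0, N₋, 0) is an equilibrium of the reduced equations of motion, and p* is Liapunov stable relative to S_{L,R}. -/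
open Real MeasureTheory

/-- `C₂(x,y,z) = 2πg ∫₀^∞ s²·((s+x²)(s+y²)(s+z²))^(−3/2) ds`. -/
noncomputable def riC2 (g x y z : ℝ) : ℝ :=
  2 * π * g * ∫ s in Set.Ioi (0:ℝ),
    s ^ 2 * ((s + x ^ 2) * (s + y ^ 2) * (s + z ^ 2)) ^ (-(3:ℝ)/2)

/-- `G^S₊(x,y,z)`. -/
noncomputable def GSp (g x y z : ℝ) : ℝ :=
  ((x - z) ^ 4 / (x * z)) *
    ((x * y ^ 2 * z + (x ^ 2 * y ^ 2 - x ^ 2 * z ^ 2 + y ^ 2 * z ^ 2)) * riC1 g x y z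
      + (x * z + y ^ 2) * riC2 g x y z)

/-- `G^S₋(x,y,z)`. -/
noncomputable def GSm (g x y z : ℝ) : ℝ :=
  ((x + z) ^ 4 / (x * z)) *
    ((x * y ^ 2 * z - (x ^ 2 * y ^ 2 - x ^ 2 * z ^ 2 + y ^ 2 * z ^ 2)) * riC1 g x y z
      + (x * z - y ^ 2) * riC2 g x y z)

/-- `N^S₊(x,y,z) = ½(√G^S₊ + √G^S₋)`. -/
noncomputable def NSp (g x y z : ℝ) : ℝ :=
  (Real.sqrt (GSp g x y z) + Real.sqrt (GSm g x y z)) / 2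

/-- `N^S₋(x,y,z) = ½(√G^S₊ − √G^S₋)`. -/
noncomputable def NSm (g x y z : ℝ) : ℝ :=
  (Real.sqrt (GSp g x y z) - Real.sqrt (GSm g x y z)) / 2

/-- Membership in `B = {(b₁,b₂) : b₁ > b₂ > b₁^(−1/2) > 0}`. -/
def memB (b1 b2 : ℝ) : Prop := b2 < b1 ∧ (Real.sqrt b1)⁻¹ < b2 ∧ 0 < (Real.sqrt b1)⁻¹

/-- The reduced Hamiltonian `H(b₁,b₂,c₁,c₂,m₁,…,m₆)` of the Riemann ellipsoid problem,
as a function on `ℝ¹⁰` (coordinates `p 0 = b₁, p 1 = b₂, p 2 = c₁, p 3 = c₂,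
p 4,…,p 9 = m₁,…,m₆`), with `b₃ = (b₁b₂)⁻¹`. -/
noncomputable def Hred (g : ℝ) (p : Fin 10 → ℝ) : ℝ :=
  let b1 := p 0; let b2 := p 1; let c1 := p 2; let c2 := p 3
  let m1 := p 4; let m2 := p 5; let m3 := p 6
  let m4 := p 7; let m5 := p 8; let m6 := p 9
  let b3 := (b1 * b2)⁻¹
  ((b2 ^ 2 + b3 ^ 2) * b1 ^ 2 * c1 ^ 2 + (b1 ^ 2 + b3 ^ 2) * b2 ^ 2 * c2 ^ 2
        - 2 * b3 * c1 * c2) /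
      (2 * (b1 ^ 2 * b2 ^ 2 + b1 ^ 2 * b3 ^ 2 + b2 ^ 2 * b3 ^ 2))
    + ((b1 ^ 2 + b2 ^ 2) * (m3 ^ 2 + m6 ^ 2) + 4 * b1 * b2 * m3 * m6) /
        (2 * (b1 ^ 2 - b2 ^ 2) ^ 2)
    + ((b1 ^ 2 + b3 ^ 2) * (m2 ^ 2 + m5 ^ 2) + 4 * b1 * b3 * m2 * m5) /
        (2 * (b1 ^ 2 - b3 ^ 2) ^ 2)
    + ((b2 ^ 2 + b3 ^ 2) * (m1 ^ 2 + m4 ^ 2) + 4 * b2 * b3 * m1 * m4) /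
        (2 * (b2 ^ 2 - b3 ^ 2) ^ 2)
    - 2 * π * g * ∫ s in Set.Ioi (0:ℝ),
        ((s + b1 ^ 2) * (s + b2 ^ 2) * (s + b3 ^ 2)) ^ (-(1:ℝ)/2)

/-- Partial derivative `∂H/∂pᵢ`. -/
noncomputable def pd (g : ℝ) (i : Fin 10) (p : Fin 10 → ℝ) : ℝ :=
  fderiv ℝ (Hred g) p (Pi.single i 1)

/-- The reduced vector field: `b' = ∂H/∂c`, `c' = −∂H/∂b`, `η_l' = η_l × ∇_{η_l}H`,
`η_r' = η_r × ∇_{η_r}H`. -/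
noncomputable def RVF (g : ℝ) (p : Fin 10 → ℝ) : Fin 10 → ℝ :=
  ![pd g 2 p, pd g 3 p, -pd g 0 p, -pd g 1 p,
    p 5 * pd g 6 p - p 6 * pd g 5 p,
    p 6 * pd g 4 p - p 4 * pd g 6 p,
    p 4 * pd g 5 p - p 5 * pd g 4 p,
    p 8 * pd g 9 p - p 9 * pd g 8 p,
    p 9 * pd g 7 p - p 7 * pd g 9 p,
    p 7 * pd g 8 p - p 8 * pd g 7 p]

/-- `γ` is a solution of the reduced equations of motion on the set `s ⊂ ℝ`
(staying in the domain `B × ℝ² × ℝ³ × ℝ³`). -/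
def IsSolution (g : ℝ) (γ : ℝ → Fin 10 → ℝ) (s : Set ℝ) : Prop :=
  ∀ t ∈ s, memB (γ t 0) (γ t 1) ∧
    ∀ i : Fin 10, HasDerivAt (fun τ => γ τ i) (RVF g (γ t) i) t

/-- Liapunov stability of an equilibrium `pstar` relative to
`S_{L,R} = {(b,c,η_l,η_r) : ‖η_l‖ = L, ‖η_r‖ = R}`. -/
def LiapunovStable (g L R : ℝ) (pstar : Fin 10 → ℝ) : Prop :=
  ∀ ε > 0, ∃ δ > 0, ∀ (T : ℝ) (γ : ℝ → Fin 10 → ℝ),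
    IsSolution g γ (Set.Ico 0 T) →
    Real.sqrt ((γ 0 4) ^ 2 + (γ 0 5) ^ 2 + (γ 0 6) ^ 2) = L →
    Real.sqrt ((γ 0 7) ^ 2 + (γ 0 8) ^ 2 + (γ 0 9) ^ 2) = R →
    dist (γ 0) pstar < δ →
    ∀ t ∈ Set.Ico (0:ℝ) T, dist (γ t) pstar < ε

/-!
The functions `H`, `‖η_l‖` and `‖η_r‖` are conserved, so a strict local minimum of `H` on a level
set of the two norms is Liapunov stable there. On such a level set `H` is bounded below, with
equality at `p*`, by the sum of
* the kinetic energy of the deformation, which is positive definite;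
* two quadratic forms in the momenta that tilt the rotation out of the middle axis, definite as long
  as the momenta are counter-parallel and not too different in size;
* an effective potential of the semiaxes, in which both momenta point along the middle axis.

In the logarithms of the semiaxes, restricted to constant volume, the effective potential is
critical by the equations defining `N₊` and `N₋`. Its second variation is a sum of elliptic
integrals in Carlson's form, and the inequality `b₂ ≤ 3 b₃`, which `0 < G^S₋` forces, makes it
positive. The same minimality, tested along coordinate lines, gives that `p*` is an equilibrium.
-/

section GeneralLemmas

open Filter Topology Set

lemma binaryForm_pos {E C D e d : ℝ} (hE : 0 < E) (hdet : C ^ 2 < E * D) (h : e ≠ 0 ∨ d ≠ 0) :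
    0 < E * e ^ 2 + 2 * C * e * d + D * d ^ 2 := by
  suffices 0 < E * (E * e ^ 2 + 2 * C * e * d + D * d ^ 2) from pos_of_mul_pos_right this hE.le
  have completed_square : E * (E * e ^ 2 + 2 * C * e * d + D * d ^ 2)
      = (E * e + C * d) ^ 2 + (E * D - C ^ 2) * d ^ 2 := by ring
  rw [completed_square]
  rcases eq_or_ne d 0 with rfl | hd
  · have he : e ≠ 0 := by simpa using h
    simpa using by positivity
  · exact add_pos_of_nonneg_of_pos (sq_nonneg _) (mul_pos (sub_pos.2 hdet) (by positivity))

lemma quadratic_pos_of_mem_Icc {a b c l u t : ℝ} (ha : a ≤ 0) (hl : 0 < a * l ^ 2 + b * l + c)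
    (hu : 0 < a * u ^ 2 + b * u + c) (ht : t ∈ Icc l u) : 0 < a * t ^ 2 + b * t + c := by
  obtain ⟨hlt, htu⟩ := ht
  by_contra! hneg
  have hlt' : 0 < t - l := sub_pos.2 (hlt.lt_of_ne (by rintro rfl; linarith))
  have htu' : 0 < u - t := sub_pos.2 (htu.lt_of_ne (by rintro rfl; linarith))
  nlinarith [mul_nonneg (neg_nonneg.2 ha) (mul_pos (mul_pos hlt' htu') (add_pos hlt' htu')).le,
    mul_pos htu' hl, mul_pos hlt' hu]

lemma forall_pos_of_lt_of_lt {b : Fin 3 → ℝ} (hb₂ : 0 < b 2) (hb₂₁ : b 2 < b 1)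
    (hb₁₀ : b 1 < b 0) (i : Fin 3) : 0 < b i := by
  fin_cases i
  exacts [hb₂.trans (hb₂₁.trans hb₁₀), hb₂.trans hb₂₁, hb₂]

variable {E F : Type*} [NormedAddCommGroup E] [NormedSpace ℝ E]
  [NormedAddCommGroup F] [NormedSpace ℝ F]

lemma exists_pos_mul_norm_sq_le [FiniteDimensional ℝ E] {B : E →L[ℝ] E →L[ℝ] ℝ}
    (hB : ∀ v ≠ 0, 0 < B v v) : ∃ c > 0, ∀ v, c * ‖v‖ ^ 2 ≤ B v v := by
  obtain ⟨c, hc, hle⟩ := (isCompact_sphere (0 : E) 1).exists_forall_le' (f := fun v ↦ B v v)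
    (by fun_prop) (a := 0) fun v hv ↦ hB v (ne_zero_of_mem_unit_sphere ⟨v, hv⟩)
  refine ⟨c, hc, fun v ↦ ?_⟩
  rcases eq_or_ne v 0 with rfl | hv
  · simp
  have hnorm : 0 < ‖v‖ := norm_pos_iff.2 hv
  have hunit := hle (‖v‖⁻¹ • v) (by simp [norm_smul, hnorm.ne'])
  simp only [map_smul, smul_apply, smul_eq_mul] at hunit
  calc c * ‖v‖ ^ 2 ≤ ‖v‖⁻¹ * (‖v‖⁻¹ * B v v) * ‖v‖ ^ 2 := by gcongr
    _ = B v v := by field_simp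

lemma hasDerivAt_comp_line {f : E → F} {f' : E →L[ℝ] F} {a v : E} {t : ℝ}
    (hf : HasFDerivAt f f' (a + t • v)) : HasDerivAt (fun t : ℝ ↦ f (a + t • v)) (f' v) t := by
  have hline : HasDerivAt (fun t : ℝ ↦ a + t • v) v t := by
    simpa using ((hasDerivAt_id t).smul_const v).const_add a
  exact hf.comp_hasDerivAt t hline

lemma eventually_lt_of_fderiv_fderiv_pos [FiniteDimensional ℝ E] {f : E → ℝ} {a : E}
    (hf : ContDiffAt ℝ 2 f a) (hf' : fderiv ℝ f a = 0)
    (hf'' : ∀ v ≠ 0, 0 < fderiv ℝ (fderiv ℝ f) a v v) : ∀ᶠ x in 𝓝[≠] a, f a < f x := by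
  obtain ⟨c, hc, hcoercive⟩ := exists_pos_mul_norm_sq_le hf''
  have hsecond : HasFDerivAt (fderiv ℝ f) (fderiv ℝ (fderiv ℝ f) a) a :=
    ((hf.fderiv_right (m := 1) le_rfl).differentiableAt one_ne_zero).hasFDerivAt
  have hnear : ∀ᶠ x in 𝓝 a, DifferentiableAt ℝ f x ∧
      ‖fderiv ℝ f x - fderiv ℝ (fderiv ℝ f) a (x - a)‖ ≤ c / 2 * ‖x - a‖ := by
    refine ((hf.eventually (by simp)).mono fun x hx ↦ hx.differentiableAt two_ne_zero).and ?_
    simpa [hf'] using hsecond.isLittleO.bound (half_pos hc)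
  obtain ⟨r, hr, hball⟩ := Metric.eventually_nhds_iff_ball.1 hnear
  filter_upwards [self_mem_nhdsWithin, mem_nhdsWithin_of_mem_nhds (Metric.ball_mem_nhds a hr)]
    with x hxa hxr
  set h := x - a
  have hh : 0 < ‖h‖ := norm_pos_iff.2 (sub_ne_zero.2 hxa)
  have hmem : ∀ t ∈ Icc (0 : ℝ) 1, a + t • h ∈ Metric.ball a r := fun t ht ↦
    (convex_ball a r).add_smul_sub_mem (Metric.mem_ball_self hr) hxr ht
  have hline (t) (ht : t ∈ Icc (0 : ℝ) 1) :=
    hasDerivAt_comp_line (hball _ (hmem t ht)).1.hasFDerivAt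
  have hmono : StrictMonoOn (fun t : ℝ ↦ f (a + t • h)) (Icc 0 1) := by
    refine strictMonoOn_of_deriv_pos (convex_Icc 0 1)
      (fun t ht ↦ (hline t ht).continuousAt.continuousWithinAt) fun t ht ↦ ?_
    rw [interior_Icc] at ht
    have htIcc := Ioo_subset_Icc_self ht
    rw [(hline t htIcc).deriv]
    have hbound := (hball _ (hmem t htIcc)).2
    rw [add_sub_cancel_left, norm_smul, Real.norm_of_nonneg ht.1.le] at hbound
    have herror := (abs_le.1 ((ContinuousLinearMap.le_of_opNorm_le _ hbound h))).1
    simp only [map_smul, sub_apply, smul_apply, smul_eq_mul] at herror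
    nlinarith [mul_le_mul_of_nonneg_left (hcoercive h) ht.1.le,
      mul_pos (mul_pos hc ht.1) (pow_pos hh 2)]
  simpa [h] using hmono (left_mem_Icc.2 zero_le_one) (right_mem_Icc.2 zero_le_one) one_pos

lemma eventually_lt_of_deriv_deriv_line_pos [FiniteDimensional ℝ E] {f : E → ℝ} {a : E}
    (hf : ContDiffAt ℝ 2 f a) (hf' : ∀ v, deriv (fun t : ℝ ↦ f (a + t • v)) 0 = 0)
    (hf'' : ∀ v ≠ 0, 0 < deriv (deriv fun t : ℝ ↦ f (a + t • v)) 0) :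
    ∀ᶠ x in 𝓝[≠] a, f a < f x := by
  have hbase (v : E) : a + (0 : ℝ) • v = a := by simp
  have hfirst (v : E) : ∀ᶠ t in 𝓝 (0 : ℝ),
      deriv (fun t : ℝ ↦ f (a + t • v)) t = fderiv ℝ f (a + t • v) v := by
    have htends : Tendsto (fun t : ℝ ↦ a + t • v) (𝓝 0) (𝓝 a) :=
      Continuous.tendsto' (by fun_prop) _ _ (hbase v)
    filter_upwards [htends.eventually (hf.eventually (by simp))] with t ht
    exact (hasDerivAt_comp_line (ht.differentiableAt two_ne_zero).hasFDerivAt).deriv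
  refine eventually_lt_of_fderiv_fderiv_pos hf ?_ fun v hv ↦ ?_
  · ext v
    simpa using (hfirst v).self_of_nhds.symm.trans (hf' v)
  · have hsecond : HasFDerivAt (fderiv ℝ f) (fderiv ℝ (fderiv ℝ f) a) (a + (0 : ℝ) • v) := by
      rw [hbase]
      exact ((hf.fderiv_right (m := 1) le_rfl).differentiableAt one_ne_zero).hasFDerivAt
    have hline := (hasDerivAt_comp_line hsecond).clm_apply (hasDerivAt_const 0 v)
    rw [map_zero, add_zero] at hline
    rw [← hline.deriv, ← EventuallyEq.deriv_eq (hfirst v)]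
    exact hf'' v hv

lemma eq_of_hasDerivAt_zero_Ico {f : ℝ → F} {a b t : ℝ} (hf : ∀ s ∈ Ico a b, HasDerivAt f 0 s)
    (ht : t ∈ Ico a b) : f t = f a := by
  have hsub : Icc a t ⊆ Ico a b := Icc_subset_Ico_right ht.2
  exact constant_of_has_deriv_right_zero
    (fun s hs ↦ (hf s (hsub hs)).continuousAt.continuousWithinAt)
    (fun s hs ↦ (hf s (hsub (Ico_subset_Icc_self hs))).hasDerivWithinAt) t (right_mem_Icc.2 ht.1)

-- Lyapunov's argument: to leave a small ball, a trajectory in `K` would have to cross its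
-- boundary sphere, on which `f` exceeds the values it takes close to `x₀`.
lemma exists_forall_dist_lt_of_conserved {X : Type*} [MetricSpace X] [ProperSpace X] {K : Set X}
    {f : X → ℝ} {x₀ : X} (hK : IsClosed K) (hf : ∀ᶠ x in 𝓝 x₀, ContinuousAt f x)
    (hmin : ∀ᶠ x in 𝓝[≠] x₀, x ∈ K → f x₀ < f x) {ε : ℝ} (hε : 0 < ε) :
    ∃ δ > 0, ∀ (T : ℝ) (γ : ℝ → X), ContinuousOn γ (Ico 0 T) →
      (∀ t ∈ Ico 0 T, γ t ∈ K) → (∀ t ∈ Ico 0 T, f (γ t) = f (γ 0)) →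
      dist (γ 0) x₀ < δ → ∀ t ∈ Ico 0 T, dist (γ t) x₀ < ε := by
  obtain ⟨r₀, hr₀, hball⟩ :=
    Metric.eventually_nhds_iff.1 (hf.and (eventually_nhdsWithin_iff.1 hmin))
  obtain ⟨r, hr, hrlt⟩ := exists_between (lt_min hr₀ hε)
  have hsphere : ∀ x ∈ Metric.sphere x₀ r ∩ K, ContinuousAt f x ∧ f x₀ < f x := fun x ⟨hx, hxK⟩ ↦
    have h := hball (hx.trans_lt (hrlt.trans_le (min_le_left _ _)))
    ⟨h.1, h.2 (Metric.ne_of_mem_sphere hx hr.ne') hxK⟩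
  obtain ⟨M, hM, hMle⟩ := ((isCompact_sphere x₀ r).inter_right hK).exists_forall_le'
    (fun x hx ↦ (hsphere x hx).1.continuousWithinAt) fun x hx ↦ (hsphere x hx).2
  obtain ⟨d, hd, hdlt⟩ := Metric.eventually_nhds_iff.1 (hf.self_of_nhds.eventually_lt_const hM)
  refine ⟨min d r, lt_min hd hr, fun T γ hγ hγK hconst hγ₀ t ht ↦ ?_⟩
  by_contra! hfar
  have hsub : Icc 0 t ⊆ Ico 0 T := Icc_subset_Ico_right ht.2
  obtain ⟨s, hs, hsr⟩ := intermediate_value_Icc ht.1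
    ((continuous_id.dist continuous_const).comp_continuousOn (hγ.mono hsub))
    ⟨(hγ₀.trans_le (min_le_right _ _)).le, (hrlt.le.trans (min_le_right _ _)).trans hfar⟩
  have hcross := hMle (γ s) ⟨hsr, hγK s (hsub hs)⟩
  rw [hconst s (hsub hs)] at hcross
  exact hcross.not_gt (hdlt (hγ₀.trans_le (min_le_left _ _)))

end GeneralLemmas

section CarlsonIntegral

open Filter Topology Set

variable {ι : Type*}

lemma add_single_nonneg [DecidableEq ι] {a : ι → ℝ} (ha : 0 ≤ a) (i : ι) :
    0 ≤ a + Pi.single i 1 :=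
  add_nonneg ha (Pi.single_nonneg.2 zero_le_one)

lemma exists_pos_eventually_forall_le [Finite ι] {X : ι → ℝ} (hX : ∀ i, 0 < X i) :
    ∃ m > 0, ∀ᶠ Y in 𝓝 X, ∀ i, m ≤ Y i := by
  have hlt : ∀ᶠ m in 𝓝[>] (0 : ℝ), ∀ i, m < X i :=
    eventually_all.2 fun i ↦ (eventually_lt_nhds (hX i)).filter_mono nhdsWithin_le_nhds
  obtain ⟨m, hmX, hm⟩ := (hlt.and self_mem_nhdsWithin).exists
  exact ⟨m, hm, eventually_all.2 fun i ↦
    ((continuous_apply i).tendsto X).eventually (eventually_ge_nhds (hmX i))⟩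

lemma isOpen_setOf_forall_pos [Finite ι] : IsOpen {X : ι → ℝ | ∀ i, 0 < X i} := by
  simp only [ofPred_forall]
  exact isOpen_iInter_of_finite fun i ↦ isOpen_lt continuous_const (continuous_apply i)

variable [Fintype ι]

/-- The integrand `s ^ k ∏ᵢ (s + X i) ^ (-a i)` of Carlson's multivariate `R`-function. -/
noncomputable def carlsonKernel (k : ℕ) (a X : ι → ℝ) (s : ℝ) : ℝ :=
  s ^ k * ∏ i, (s + X i) ^ (-a i)

/-- Carlson's `R`-function without its normalising constant, `∫₀^∞ s ^ k ∏ᵢ (s + X i) ^ (-a i) ds`;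
all the integrals over the semiaxes of an ellipsoid needed here are of this form. -/
noncomputable def carlsonIntegral (k : ℕ) (a X : ι → ℝ) : ℝ :=
  ∫ s in Ioi (0 : ℝ), carlsonKernel k a X s

variable {k : ℕ} {a X : ι → ℝ} {s : ℝ}

lemma carlsonKernel_pos (hX : ∀ i, 0 < X i) (hs : 0 < s) : 0 < carlsonKernel k a X s :=
  mul_pos (pow_pos hs k) (Finset.prod_pos fun i _ ↦ rpow_pos_of_pos (add_pos hs (hX i)) _)

lemma carlsonKernel_succ : carlsonKernel (k + 1) a X s = s * carlsonKernel k a X s := by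
  rw [carlsonKernel, carlsonKernel, pow_succ', mul_assoc]

lemma carlsonKernel_le {m : ℝ} (ha : 0 ≤ a) (hm : 0 < m) (hX : ∀ i, m ≤ X i) (hs : 0 < s) :
    carlsonKernel k a X s ≤ (s + m) ^ (k - ∑ i, a i) := by
  have hsm : 0 < s + m := add_pos hs hm
  calc carlsonKernel k a X s ≤ (s + m) ^ k * ∏ i, (s + m) ^ (-a i) := by
        refine mul_le_mul (by gcongr; linarith) (Finset.prod_le_prod (fun i _ ↦ ?_) fun i _ ↦ ?_)
          (Finset.prod_nonneg fun i _ ↦ ?_) (by positivity)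
        · exact rpow_nonneg (by linarith [hX i]) _
        · exact rpow_le_rpow_of_nonpos hsm (by linarith [hX i]) (neg_nonpos.2 (ha i))
        · exact rpow_nonneg (by linarith [hX i]) _
    _ = (s + m) ^ (k - ∑ i, a i) := by
        rw [← rpow_natCast, ← rpow_sum_of_pos hsm, ← rpow_add hsm, Finset.sum_neg_distrib,
          sub_eq_add_neg]

lemma measurable_carlsonKernel : Measurable (carlsonKernel k a X) := by
  unfold carlsonKernel; fun_prop

lemma integrableOn_add_rpow {m e : ℝ} (hm : 0 < m) (he : e < -1) :
    IntegrableOn (fun s : ℝ ↦ (s + m) ^ e) (Ioi 0) :=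
  integrableOn_add_rpow_Ioi_of_lt he (neg_lt_zero.2 hm)

lemma integrableOn_carlsonKernel (ha : 0 ≤ a) (hk : k + 1 < ∑ i, a i) (hX : ∀ i, 0 < X i) :
    IntegrableOn (carlsonKernel k a X) (Ioi 0) := by
  obtain ⟨m, hm, hmX⟩ := exists_pos_eventually_forall_le hX
  refine (integrableOn_add_rpow hm (by linarith : (k : ℝ) - ∑ i, a i < -1)).mono'
    measurable_carlsonKernel.aestronglyMeasurable ?_
  filter_upwards [ae_restrict_mem measurableSet_Ioi] with s hs
  rw [Real.norm_of_nonneg (carlsonKernel_pos hX hs).le]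
  exact carlsonKernel_le ha hm hmX.self_of_nhds hs

lemma tendsto_carlsonKernel_atTop (ha : 0 ≤ a) (hk : k < ∑ i, a i) (hX : ∀ i, 0 < X i) :
    Tendsto (carlsonKernel k a X) atTop (𝓝 0) := by
  obtain ⟨m, hm, hmX⟩ := exists_pos_eventually_forall_le hX
  have hbound : Tendsto (fun s : ℝ ↦ (s + m) ^ (-(∑ i, a i - k))) atTop (𝓝 0) :=
    (tendsto_rpow_neg_atTop (sub_pos.2 hk)).comp (tendsto_atTop_add_const_right _ m tendsto_id)
  rw [neg_sub] at hbound
  refine squeeze_zero' ?_ ?_ hbound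
  · exact (eventually_gt_atTop 0).mono fun s hs ↦ (carlsonKernel_pos hX hs).le
  · exact (eventually_gt_atTop 0).mono fun s hs ↦ carlsonKernel_le ha hm hmX.self_of_nhds hs

lemma setIntegral_Ioi_pos {f : ℝ → ℝ} {a : ℝ} (hf : IntegrableOn f (Ioi a))
    (hpos : ∀ s ∈ Ioi a, 0 < f s) : 0 < ∫ s in Ioi a, f s := by
  rw [setIntegral_pos_iff_support_of_nonneg_ae
    ((ae_restrict_mem measurableSet_Ioi).mono fun s hs ↦ (hpos s hs).le) hf,
    inter_eq_right.2 fun s hs ↦ Function.mem_support.2 (hpos s hs).ne']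
  simp

section Recurrences

variable [DecidableEq ι]

lemma carlsonKernel_add_single {i : ι} (hsX : 0 < s + X i) :
    carlsonKernel k (a + Pi.single i 1) X s = carlsonKernel k a X s / (s + X i) := by
  have hfactor (j : ι) : (s + X j) ^ (-(a + Pi.single i 1 : ι → ℝ) j)
      = (s + X j) ^ (-a j) * if i = j then (s + X i)⁻¹ else 1 := by
    split_ifs with hij
    · subst hij
      rw [Pi.add_apply, Pi.single_eq_same, neg_add, rpow_add hsX, rpow_neg_one]
    · simp [Pi.single_eq_of_ne' hij]
  simp only [carlsonKernel, hfactor, Finset.prod_mul_distrib, Finset.prod_ite_eq,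
    Finset.mem_univ, if_true]
  rw [div_eq_mul_inv, mul_assoc]

lemma sum_add_single (a : ι → ℝ) (i : ι) : ∑ j, (a + Pi.single i 1 : ι → ℝ) j = ∑ j, a j + 1 := by
  simp [Finset.sum_add_distrib]

lemma hasFDerivAt_carlsonKernel (hX : ∀ i, 0 < s + X i) :
    HasFDerivAt (fun X ↦ carlsonKernel k a X s)
      (∑ i, (-a i * carlsonKernel k (a + Pi.single i 1) X s) •
        ContinuousLinearMap.proj (R := ℝ) (φ := fun _ : ι ↦ ℝ) i) X := by
  have hfactor (i : ι) : HasFDerivAt (fun X : ι → ℝ ↦ (s + X i) ^ (-a i))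
      ((-a i * (s + X i) ^ (-a i - 1)) • ContinuousLinearMap.proj (R := ℝ) i) X :=
    ((hasFDerivAt_apply i X).const_add s).rpow_const (Or.inl (hX i).ne')
  refine ((HasFDerivAt.finsetProd fun i _ ↦ hfactor i).const_mul (s ^ k)).congr_fderiv ?_
  rw [Finset.smul_sum]
  refine Finset.sum_congr rfl fun i _ ↦ ?_
  rw [smul_smul, smul_smul, carlsonKernel_add_single (hX i), carlsonKernel,
    ← Finset.mul_prod_erase _ _ (Finset.mem_univ i), rpow_sub_one (hX i).ne']
  congr 1
  ring

lemma hasFDerivAt_carlsonIntegral (ha : 0 ≤ a) (hk : k + 1 < ∑ i, a i) (hX : ∀ i, 0 < X i) :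
    HasFDerivAt (carlsonIntegral k a)
      (∑ i, (-a i * carlsonIntegral k (a + Pi.single i 1) X) •
        ContinuousLinearMap.proj (R := ℝ) (φ := fun _ : ι ↦ ℝ) i) X := by
  obtain ⟨m, hm, hmX⟩ := exists_pos_eventually_forall_le hX
  have hint (i : ι) : IntegrableOn (carlsonKernel k (a + Pi.single i 1) X) (Ioi 0) :=
    integrableOn_carlsonKernel (add_single_nonneg ha i) (by rw [sum_add_single]; linarith) hX
  have hderiv := hasFDerivAt_integral_of_dominated_of_fderiv_le (μ := volume.restrict (Ioi 0))
    (F := fun X s ↦ carlsonKernel k a X s)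
    (F' := fun X s ↦ ∑ i, (-a i * carlsonKernel k (a + Pi.single i 1) X s) •
      ContinuousLinearMap.proj (R := ℝ) (φ := fun _ : ι ↦ ℝ) i)
    (bound := fun s ↦ ∑ i, a i * (s + m) ^ (k - ∑ j, (a + Pi.single i 1 : ι → ℝ) j) *
      ‖ContinuousLinearMap.proj (R := ℝ) (φ := fun _ : ι ↦ ℝ) i‖)
    hmX (Eventually.of_forall fun _ ↦ measurable_carlsonKernel.aestronglyMeasurable)
    (integrableOn_carlsonKernel ha hk hX) ?_ ?_ ?_ ?_
  · refine hderiv.congr_fderiv ?_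
    rw [integral_finsetSum _ fun i _ ↦ ((hint i).const_mul _).smul_const _]
    simp_rw [integral_smul_const, integral_const_mul, carlsonIntegral]
  · exact Finset.aestronglyMeasurable_fun_sum _ fun i _ ↦
      (measurable_carlsonKernel.const_mul _).aestronglyMeasurable.smul_const _
  · filter_upwards [ae_restrict_mem measurableSet_Ioi] with s hs Y hY
    refine norm_sum_le_of_le _ fun i _ ↦ ?_
    have hpos := carlsonKernel_pos (k := k) (a := a + Pi.single i 1)
      (fun i ↦ hm.trans_le (hY i)) hs
    rw [norm_smul, norm_mul, norm_neg, Real.norm_of_nonneg (ha i), Real.norm_of_nonneg hpos.le]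
    gcongr
    · exact ha i
    · exact carlsonKernel_le (add_single_nonneg ha i) hm hY hs
  · refine integrable_finsetSum _ fun i _ ↦ ((integrableOn_add_rpow hm ?_).const_mul _).mul_const _
    rw [sum_add_single]
    linarith
  · filter_upwards [ae_restrict_mem measurableSet_Ioi] with s hs Y hY
    exact hasFDerivAt_carlsonKernel fun i ↦ add_pos hs (hm.trans_le (hY i))

lemma hasDerivAt_carlsonIntegral_comp {γ : ℝ → ι → ℝ} {γ' : ι → ℝ} {t : ℝ} (ha : 0 ≤ a)
    (hk : k + 1 < ∑ i, a i) (hX : ∀ i, 0 < γ t i) (hγ : HasDerivAt γ γ' t) :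
    HasDerivAt (fun t ↦ carlsonIntegral k a (γ t))
      (-∑ i, a i * carlsonIntegral k (a + Pi.single i 1) (γ t) * γ' i) t := by
  refine ((hasFDerivAt_carlsonIntegral ha hk hX).comp_hasDerivAt t hγ).congr_deriv ?_
  simp

end Recurrences

lemma contDiffOn_carlsonIntegral (n : ℕ) (ha : 0 ≤ a) (hk : k + 1 < ∑ i, a i) :
    ContDiffOn ℝ n (carlsonIntegral k a) {X | ∀ i, 0 < X i} := by
  classical
  induction n generalizing a with
  | zero =>
    exact contDiffOn_zero.2 fun X hX ↦
      (hasFDerivAt_carlsonIntegral ha hk hX).continuousAt.continuousWithinAt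
  | succ n ih =>
    rw [Nat.cast_succ, contDiffOn_succ_iff_hasFDerivWithinAt_of_uniqueDiffOn
      isOpen_setOf_forall_pos.uniqueDiffOn]
    refine ⟨fun h ↦ absurd h (by simp), _, ?_, fun X hX ↦
      (hasFDerivAt_carlsonIntegral ha hk hX).hasFDerivWithinAt⟩
    exact ContDiffOn.sum fun i _ ↦ (contDiffOn_const.mul
      (ih (add_single_nonneg ha i) (by rw [sum_add_single]; linarith))).smul contDiffOn_const

lemma contDiffAt_carlsonIntegral (n : ℕ) (ha : 0 ≤ a) (hk : k + 1 < ∑ i, a i)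
    (hX : ∀ i, 0 < X i) : ContDiffAt ℝ n (carlsonIntegral k a) X :=
  (contDiffOn_carlsonIntegral n ha hk).contDiffAt (isOpen_setOf_forall_pos.mem_nhds hX)

end CarlsonIntegral

section CarlsonRecurrences

open Filter Topology Set

variable {ι : Type*} [Fintype ι] [DecidableEq ι] {k : ℕ} {a X : ι → ℝ}

lemma carlsonIntegral_eq_add (ha : 0 ≤ a) (hk : k + 1 < ∑ i, a i) (hX : ∀ i, 0 < X i) (i : ι) :
    carlsonIntegral k a X = carlsonIntegral (k + 1) (a + Pi.single i 1) X
      + X i * carlsonIntegral k (a + Pi.single i 1) X := by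
  have ha' := add_single_nonneg ha i
  have hsum := sum_add_single a i
  rw [carlsonIntegral, carlsonIntegral, carlsonIntegral, ← integral_const_mul, ← integral_add
    (integrableOn_carlsonKernel ha' (by push_cast; linarith) hX)
    ((integrableOn_carlsonKernel ha' (by linarith) hX).const_mul _)]
  refine setIntegral_congr_fun measurableSet_Ioi fun s hs ↦ ?_
  have hsX : 0 < s + X i := add_pos hs (hX i)
  simp only [carlsonKernel_succ, carlsonKernel_add_single hsX]
  field_simp

lemma carlsonIntegral_sub (ha : 0 ≤ a) (hk : k < ∑ i, a i) (hX : ∀ i, 0 < X i) (i j : ι) :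
    carlsonIntegral k (a + Pi.single i 1) X - carlsonIntegral k (a + Pi.single j 1) X
      = (X j - X i) * carlsonIntegral k (a + Pi.single i 1 + Pi.single j 1) X := by
  rw [carlsonIntegral_eq_add (add_single_nonneg ha i) (by rw [sum_add_single]; linarith) hX j,
    carlsonIntegral_eq_add (add_single_nonneg ha j) (by rw [sum_add_single]; linarith) hX i,
    add_right_comm a (Pi.single j 1)]
  ring

lemma mul_carlsonIntegral_sub (ha : 0 ≤ a) (hk : k < ∑ i, a i) (hX : ∀ i, 0 < X i) (i j : ι) :
    X i * carlsonIntegral k (a + Pi.single i 1) X - X j * carlsonIntegral k (a + Pi.single j 1) X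
      = (X i - X j) * carlsonIntegral (k + 1) (a + Pi.single i 1 + Pi.single j 1) X := by
  rw [carlsonIntegral_eq_add (add_single_nonneg ha i) (by rw [sum_add_single]; linarith) hX j,
    carlsonIntegral_eq_add (add_single_nonneg ha j) (by rw [sum_add_single]; linarith) hX i,
    add_right_comm a (Pi.single j 1)]
  ring

lemma hasDerivAt_carlsonKernel {s : ℝ} (hX : ∀ i, 0 < s + X i) :
    HasDerivAt (carlsonKernel (k + 1) a X) ((k + 1) * carlsonKernel k a X s
      - ∑ i, a i * carlsonKernel (k + 1) (a + Pi.single i 1) X s) s := by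
  have hfactor (i : ι) : HasDerivAt (fun s ↦ (s + X i) ^ (-a i))
      (1 * -a i * (s + X i) ^ (-a i - 1)) s :=
    ((hasDerivAt_id s).add_const (X i)).rpow_const (Or.inl (hX i).ne')
  refine ((hasDerivAt_pow (k + 1) s).mul
    (HasDerivAt.fun_finsetProd fun i _ ↦ hfactor i)).congr_deriv ?_
  rw [sub_eq_add_neg, ← Finset.sum_neg_distrib, Finset.mul_sum, carlsonKernel,
    add_tsub_cancel_right, Nat.cast_succ, mul_assoc]
  congr 1
  refine Finset.sum_congr rfl fun i _ ↦ ?_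
  rw [carlsonKernel_add_single (hX i), carlsonKernel,
    ← Finset.mul_prod_erase _ _ (Finset.mem_univ i), rpow_sub_one (hX i).ne', smul_eq_mul]
  ring

lemma add_one_mul_carlsonIntegral (ha : 0 ≤ a) (hk : k + 1 < ∑ i, a i) (hX : ∀ i, 0 < X i) :
    (k + 1) * carlsonIntegral k a X
      = ∑ i, a i * carlsonIntegral (k + 1) (a + Pi.single i 1) X := by
  have hint : IntegrableOn (carlsonKernel k a X) (Ioi 0) := integrableOn_carlsonKernel ha hk hX
  have hint' (i : ι) : IntegrableOn (carlsonKernel (k + 1) (a + Pi.single i 1) X) (Ioi 0) :=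
    integrableOn_carlsonKernel (add_single_nonneg ha i)
      (by rw [sum_add_single]; push_cast; linarith) hX
  have hparts := integral_Ioi_of_hasDerivAt_of_tendsto (a := 0)
    (hasDerivAt_carlsonKernel fun i ↦ by simpa using hX i).continuousAt.continuousWithinAt
    (fun s hs ↦ hasDerivAt_carlsonKernel fun i ↦ add_pos hs (hX i))
    ((hint.const_mul _).sub (integrable_finsetSum _ fun i _ ↦ (hint' i).const_mul _))
    (tendsto_carlsonKernel_atTop ha (by push_cast; exact hk) hX)
  rw [integral_sub (hint.const_mul _) (integrable_finsetSum _ fun i _ ↦ (hint' i).const_mul _),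
    integral_finsetSum _ fun i _ ↦ (hint' i).const_mul _] at hparts
  simp only [integral_const_mul, carlsonKernel, zero_pow k.succ_ne_zero, zero_mul, sub_zero]
    at hparts
  exact sub_eq_zero.1 hparts

end CarlsonRecurrences

section IndexSymbols

open Set

lemma half_nonneg {ι : Type*} : (0 : ι → ℝ) ≤ fun _ ↦ 1 / 2 := fun _ ↦ by norm_num

variable {ι : Type*} [Fintype ι]

lemma sum_half_pos (i : ι) : 0 < ∑ _j : ι, (1 / 2 : ℝ) :=
  Finset.sum_pos (fun _ _ ↦ by norm_num) ⟨i, Finset.mem_univ i⟩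

/-- `∫₀^∞ ds / Δ(s)` with `Δ(s)² = ∏ᵢ (s + X i)`: up to a negative factor, the self-gravitational
energy of the homogeneous ellipsoid with squared semiaxes `X`. -/
noncomputable def gravityIntegral (X : ι → ℝ) : ℝ :=
  carlsonIntegral 0 (fun _ ↦ 1 / 2) X

variable [DecidableEq ι]

/-- Chandrasekhar's one-index symbol `∫₀^∞ X i / ((s + X i) Δ(s)) ds`, scaled by `X i` so that it is
minus twice the derivative of `gravityIntegral` in `log (X i)`. -/
noncomputable def indexSymbol (X : ι → ℝ) (i : ι) : ℝ :=
  X i * carlsonIntegral 0 ((fun _ ↦ 1 / 2) + Pi.single i 1) X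

/-- Chandrasekhar's two-index symbol `∫₀^∞ X i * X j / ((s + X i) (s + X j) Δ(s)) ds`, scaled by
`X i * X j` to match `indexSymbol`. -/
noncomputable def indexSymbol₂ (X : ι → ℝ) (i j : ι) : ℝ :=
  X i * X j * carlsonIntegral 0 ((fun _ ↦ 1 / 2) + Pi.single i 1 + Pi.single j 1) X

lemma mul_indexSymbol_sub {X : ι → ℝ} (hX : ∀ i, 0 < X i) (i j : ι) :
    X j * indexSymbol X i - X i * indexSymbol X j = (X j - X i) * indexSymbol₂ X i j := by
  have hsub := carlsonIntegral_sub (k := 0) half_nonneg (by simpa using sum_half_pos i) hX i j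
  simp only [indexSymbol, indexSymbol₂]
  linear_combination X i * X j * hsub

lemma indexSymbol_sub {X : ι → ℝ} (hX : ∀ i, 0 < X i) (i j : ι) :
    indexSymbol X i - indexSymbol X j = (X i - X j) *
      carlsonIntegral 1 ((fun _ ↦ 1 / 2) + Pi.single i 1 + Pi.single j 1) X :=
  mul_carlsonIntegral_sub (k := 0) half_nonneg (by simpa using sum_half_pos i) hX i j

lemma hasDerivAt_gravityIntegral {X : ℝ → ι → ℝ} {v : ι → ℝ} {t : ℝ} (hι : 2 < Fintype.card ι)
    (hX : ∀ i, 0 < X t i) (hderiv : HasDerivAt X (fun i ↦ 2 * v i * X t i) t) :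
    HasDerivAt (fun t ↦ gravityIntegral (X t)) (-∑ i, v i * indexSymbol (X t) i) t := by
  refine (hasDerivAt_carlsonIntegral_comp half_nonneg ?_ hX hderiv).congr_deriv ?_
  · simp only [Finset.sum_const, Finset.card_univ, nsmul_eq_mul, Nat.cast_zero]
    linarith [(Nat.ofNat_lt_cast (α := ℝ)).2 hι]
  · refine congrArg _ (Finset.sum_congr rfl fun i _ ↦ ?_)
    rw [indexSymbol]
    ring

lemma hasDerivAt_indexSymbol {X : ℝ → ι → ℝ} {v : ι → ℝ} {t : ℝ} (hX : ∀ i, 0 < X t i)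
    (hderiv : HasDerivAt X (fun i ↦ 2 * v i * X t i) t) (i : ι) :
    HasDerivAt (fun t ↦ indexSymbol (X t) i) (2 * v i * indexSymbol (X t) i
      - ∑ j, (1 + 2 * (Pi.single i 1 : ι → ℝ) j) * v j * indexSymbol₂ (X t) i j) t := by
  have hintegral := hasDerivAt_carlsonIntegral_comp (k := 0) (add_single_nonneg half_nonneg i)
    (by rw [sum_add_single]; simpa using sum_half_pos i) hX hderiv
  refine ((hasDerivAt_pi.1 hderiv i).mul hintegral).congr_deriv ?_
  rw [sub_eq_add_neg, mul_neg, Finset.mul_sum]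
  congr 1
  · rw [indexSymbol]
    ring
  · refine congrArg _ (Finset.sum_congr rfl fun j _ ↦ ?_)
    rw [indexSymbol₂, Pi.add_apply]
    ring

lemma indexSymbol_form_pos {X : ι → ℝ} [Nonempty ι] (hX : ∀ i, 0 < X i) {c : ι → ℝ}
    {d : ι → ι → ℝ} (hpos : ∀ s > 0, 0 < ∑ i, c i * (X i / (s + X i))
      + ∑ i, ∑ j, d i j * (X i / (s + X i) * (X j / (s + X j)))) :
    0 < ∑ i, c i * indexSymbol X i + ∑ i, ∑ j, d i j * indexSymbol₂ X i j := by
  set w : ι → ℝ := fun _ ↦ 1 / 2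
  have hw : 0 < ∑ i, w i := sum_half_pos (Classical.arbitrary ι)
  have hint (i : ι) : IntegrableOn (carlsonKernel 0 (w + Pi.single i 1) X) (Ioi 0) :=
    integrableOn_carlsonKernel (add_single_nonneg half_nonneg i)
      (by simpa only [sum_add_single, Nat.cast_zero, zero_add, lt_add_iff_pos_left] using hw) hX
  have hint₂ (i j : ι) : IntegrableOn (carlsonKernel 0 (w + Pi.single i 1 + Pi.single j 1) X)
      (Ioi 0) :=
    integrableOn_carlsonKernel (add_single_nonneg (add_single_nonneg half_nonneg i) j)
      (by rw [sum_add_single, sum_add_single]; norm_num; linarith) hX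
  have hlinear := integrable_finsetSum Finset.univ fun i _ ↦
    ((hint i).const_mul (X i)).const_mul (c i)
  have hquadratic := integrable_finsetSum Finset.univ fun i _ ↦
    integrable_finsetSum Finset.univ fun j _ ↦ ((hint₂ i j).const_mul (X i * X j)).const_mul (d i j)
  suffices 0 < ∫ s in Ioi (0 : ℝ), ∑ i, c i * (X i * carlsonKernel 0 (w + Pi.single i 1) X s)
      + ∑ i, ∑ j, d i j * (X i * X j * carlsonKernel 0 (w + Pi.single i 1 + Pi.single j 1) X s) by
    rw [integral_add hlinear hquadratic, integral_finsetSum _ fun i _ ↦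
      ((hint i).const_mul _).const_mul _, integral_finsetSum _ fun i _ ↦ integrable_finsetSum _
      fun j _ ↦ ((hint₂ i j).const_mul _).const_mul _] at this
    simp_rw [integral_finsetSum _ fun j _ ↦ ((hint₂ _ j).const_mul _).const_mul _,
      integral_const_mul] at this
    exact this
  refine setIntegral_Ioi_pos (hlinear.add hquadratic) fun s hs ↦ ?_
  have hsX (i : ι) : 0 < s + X i := add_pos hs (hX i)
  refine (mul_pos (carlsonKernel_pos (k := 0) (a := w) hX hs) (hpos s hs)).trans_eq ?_
  simp only [mul_add, Finset.mul_sum, carlsonKernel_add_single (hsX _)]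
  congr 1
  · exact Finset.sum_congr rfl fun i _ ↦ by ring
  · exact Finset.sum_congr rfl fun i _ ↦ Finset.sum_congr rfl fun j _ ↦ by ring

end IndexSymbols

section SecondVariation

/-- The integrand, as a function of `nᵢ = s / (s + bᵢ²)`, of the second variation of the effective
potential at a type S ellipsoid in the direction `bᵢ ↦ bᵢ exp (t vᵢ)`, `v₂ = -v₁ - v₃`. -/
def secondVariation (n₁ n₂ n₃ v₁ v₃ : ℝ) : ℝ :=
  2 * n₂ * (v₁ ^ 2 + v₃ ^ 2 + (v₁ + v₃) ^ 2)
    - 2 * (n₁ ^ 2 * v₁ ^ 2 + n₂ ^ 2 * (v₁ + v₃) ^ 2 + n₃ ^ 2 * v₃ ^ 2)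
    - (n₁ * v₁ - n₂ * (v₁ + v₃) + n₃ * v₃) ^ 2 + 3 * (n₁ + n₃ - n₂ - n₁ * n₃) * (v₁ - v₃) ^ 2

variable {n₁ n₂ n₃ n v₁ v₃ : ℝ}

lemma secondVariation_pos_of_mem_Icc_left {l u : ℝ} (hl : 0 < secondVariation l n₂ n₃ v₁ v₃)
    (hu : 0 < secondVariation u n₂ n₃ v₁ v₃) (hn : n₁ ∈ Set.Icc l u) :
    0 < secondVariation n₁ n₂ n₃ v₁ v₃ := by
  have hquadratic (t : ℝ) : secondVariation t n₂ n₃ v₁ v₃ = -(3 * v₁ ^ 2) * t ^ 2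
      + (3 * (1 - n₃) * (v₁ - v₃) ^ 2 - 2 * v₁ * (n₃ * v₃ - n₂ * (v₁ + v₃))) * t
      + secondVariation 0 n₂ n₃ v₁ v₃ := by
    unfold secondVariation; ring
  rw [hquadratic] at hl hu ⊢
  exact quadratic_pos_of_mem_Icc (neg_nonpos.2 (by positivity)) hl hu hn

lemma secondVariation_swap : secondVariation n₁ n₂ n₃ v₁ v₃ = secondVariation n₃ n₂ n₁ v₃ v₁ := by
  unfold secondVariation; ring

lemma secondVariation_pos_of_mem_Icc_right {l u : ℝ} (hl : 0 < secondVariation n₁ n₂ l v₁ v₃)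
    (hu : 0 < secondVariation n₁ n₂ u v₁ v₃) (hn : n₃ ∈ Set.Icc l u) :
    0 < secondVariation n₁ n₂ n₃ v₁ v₃ := by
  rw [secondVariation_swap] at hl hu ⊢
  exact secondVariation_pos_of_mem_Icc_left hl hu hn

lemma add_ne_zero_or_sub_ne_zero (hv : v₁ ≠ 0 ∨ v₃ ≠ 0) : v₁ + v₃ ≠ 0 ∨ v₁ - v₃ ≠ 0 := by
  contrapose! hv
  exact ⟨by linarith, by linarith⟩

lemma secondVariation_zero_self_self_pos (hn : 0 < n) (hn' : n < 1) (hv : v₁ ≠ 0 ∨ v₃ ≠ 0) :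
    0 < secondVariation 0 n n v₁ v₃ := by
  have hE : 0 < 12 * n - 11 * n ^ 2 := by nlinarith
  have hdet : (n ^ 2) ^ 2 < (12 * n - 11 * n ^ 2) * (4 * n - 3 * n ^ 2) := by
    have hgap : 0 < 16 * n ^ 2 * (1 - n) * (3 - 2 * n) :=
      mul_pos (mul_pos (by positivity) (sub_pos.2 hn')) (by linarith)
    linarith
  have hform := binaryForm_pos hE hdet (add_ne_zero_or_sub_ne_zero hv)
  unfold secondVariation
  linarith

lemma secondVariation_self_self_self_pos (hn : 0 < n) (hn' : n < 1) (hv : v₁ ≠ 0 ∨ v₃ ≠ 0) :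
    0 < secondVariation n n n v₁ v₃ := by
  have hv' : 0 < v₁ ^ 2 + v₃ ^ 2 := by
    rcases hv with hv | hv <;> positivity
  have hform : secondVariation n n n v₁ v₃ =
      n * (1 - n) * (2 * (v₁ ^ 2 + v₃ ^ 2 + (v₁ + v₃) ^ 2) + 3 * (v₁ - v₃) ^ 2) := by
    unfold secondVariation; ring
  rw [hform]
  exact mul_pos (mul_pos hn (sub_pos.2 hn')) (by positivity)

lemma secondVariation_zero_self_upper_pos (hn : 0 < n) (hn' : n < 1) (hv : v₁ ≠ 0 ∨ v₃ ≠ 0) :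
    0 < secondVariation 0 n (9 * n / (1 + 8 * n)) v₁ v₃ := by
  have hn'' : 0 < 1 - n := sub_pos.2 hn'
  have hE : 0 < 12 - 27 * n + 864 * n ^ 2 - 768 * n ^ 3 := by
    nlinarith [mul_pos (mul_pos hn hn) hn'', sq_nonneg (n - 1 / 8)]
  have hdet : (9 * n * (25 - 16 * n)) ^ 2 <
      (12 - 27 * n + 864 * n ^ 2 - 768 * n ^ 3) * (100 + 493 * n - 512 * n ^ 2) := by
    have hgap : 0 < (1 - n) * (1200 + 4416 * n + 20736 * n ^ 2 + 55296 * n ^ 3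
      + 393216 * n ^ 3 * (1 - n)) := by positivity
    linarith
  have hform := binaryForm_pos hE hdet (add_ne_zero_or_sub_ne_zero hv)
  refine (mul_pos (show 0 < n / (4 * (1 + 8 * n) ^ 2) by positivity) hform).trans_eq ?_
  unfold secondVariation
  field_simp
  ring

lemma secondVariation_self_self_upper_pos (hn : 0 < n) (hn' : n < 1) (hv : v₁ ≠ 0 ∨ v₃ ≠ 0) :
    0 < secondVariation n n (9 * n / (1 + 8 * n)) v₁ v₃ := by
  have hn'' : 0 < 1 - n := sub_pos.2 hn'
  have hE : 0 < 12 - 32 * n + 704 * n ^ 2 := by nlinarith [sq_nonneg (n - 1 / 8)]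
  have hdet : (8 * n * (28 + 8 * n)) ^ 2 <
      (12 - 32 * n + 704 * n ^ 2) * (112 + 704 * n + 192 * n ^ 2) := by
    have hgap : 0 < 1344 + 4864 * n + 8448 * n ^ 2 + 460800 * n ^ 3 + 131072 * n ^ 4 := by
      positivity
    linarith
  have hform := binaryForm_pos hE hdet (add_ne_zero_or_sub_ne_zero hv)
  refine (mul_pos (show 0 < n * (1 - n) / (4 * (1 + 8 * n) ^ 2) by positivity) hform).trans_eq ?_
  unfold secondVariation
  field_simp
  ring

-- Concavity in `n₁` and in `n₃` separately reduces the claim to the four corners of the rectangle.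
lemma secondVariation_pos (hn : 0 < n₂) (hn' : n₂ < 1) (h₁ : n₁ ∈ Set.Icc 0 n₂)
    (h₃ : n₃ ∈ Set.Icc n₂ (9 * n₂ / (1 + 8 * n₂))) (hv : v₁ ≠ 0 ∨ v₃ ≠ 0) :
    0 < secondVariation n₁ n₂ n₃ v₁ v₃ :=
  secondVariation_pos_of_mem_Icc_left
    (secondVariation_pos_of_mem_Icc_right (secondVariation_zero_self_self_pos hn hn' hv)
      (secondVariation_zero_self_upper_pos hn hn' hv) h₃)
    (secondVariation_pos_of_mem_Icc_right (secondVariation_self_self_self_pos hn hn' hv)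
      (secondVariation_self_self_upper_pos hn hn' hv) h₃) h₁

lemma secondVariation_div_pos {s X Y Z : ℝ} (hs : 0 < s) (hZ : 0 < Z) (hZY : Z < Y) (hYX : Y < X)
    (h9 : Y ≤ 9 * Z) (hv : v₁ ≠ 0 ∨ v₃ ≠ 0) :
    0 < secondVariation (s / (s + X)) (s / (s + Y)) (s / (s + Z)) v₁ v₃ := by
  have hY : 0 < Y := hZ.trans hZY
  have hX : 0 < X := hY.trans hYX
  have hupper : 9 * (s / (s + Y)) / (1 + 8 * (s / (s + Y))) = 9 * s / (9 * s + Y) := by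
    field_simp; ring
  refine secondVariation_pos (by positivity) ?_ ⟨by positivity, by gcongr⟩ ⟨by gcongr, ?_⟩ hv
  · rw [div_lt_one (by positivity)]; linarith
  · rw [hupper, div_le_div_iff₀ (by positivity) (by positivity)]
    nlinarith

end SecondVariation

section SemiaxisRatio

open Set

lemma mul_quadratic_le_of_nine_le {p q σ : ℝ} (hq : 9 ≤ q) (hqp : q ≤ p) :
    (p - q) / (p * q) * (4 * p ^ 2 * q + 3 * σ - σ ^ 2)
      ≤ (p ^ 2 * q - p ^ 2 + q - p * q) - (p - q) * σ := by
  have hq0 : 0 < q := by linarith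
  have hp0 : 0 < p := by linarith
  have hpq : 0 < p * q := mul_pos hp0 hq0
  have hlinear : (p - q) * ((q - 1) * p - 1) ≤ p ^ 2 * q - p ^ 2 + q - p * q := by
    nlinarith [mul_nonneg hpq.le (by linarith : 0 ≤ q - 2)]
  have hdiscr : 0 ≤ 3 * p ^ 2 * q ^ 2 - 20 * p ^ 2 * q - 10 * p * q - 9 := by
    have h₁ : 27 * (p ^ 2 * q) ≤ 3 * p ^ 2 * q ^ 2 := by nlinarith [mul_pos (pow_pos hp0 2) hq0]
    have h₂ : 9 * (p * q) ≤ p ^ 2 * q := by nlinarith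
    have h₃ : 81 ≤ p * q := by nlinarith
    linarith
  have hquadratic : 4 * p ^ 2 * q + 3 * σ - σ ^ 2 ≤ ((q - 1) * p - 1 - σ) * (p * q) := by
    nlinarith [sq_nonneg (2 * σ - (p * q + 3))]
  calc (p - q) / (p * q) * (4 * p ^ 2 * q + 3 * σ - σ ^ 2)
      ≤ (p - q) / (p * q) * (((q - 1) * p - 1 - σ) * (p * q)) :=
        mul_le_mul_of_nonneg_left hquadratic (div_nonneg (by linarith) hpq.le)
    _ = (p - q) * ((q - 1) * p - 1) - (p - q) * σ := by field_simp
    _ ≤ _ := by linarith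

lemma mul_quadratic_le_of_nine_mul_sq_le {x Y z s : ℝ} (hz : 0 < z) (h9 : 9 * z ^ 2 ≤ Y)
    (hY : Y ≤ x * z) :
    (x * z - Y) * z / (x * Y) * (4 * x ^ 2 * Y + 3 * z ^ 2 * s - s ^ 2)
      ≤ (x ^ 2 * Y - x ^ 2 * z ^ 2 + Y * z ^ 2 - x * Y * z) - (x * z - Y) * s := by
  have hz2 : 0 < z ^ 2 := by positivity
  obtain ⟨p, rfl⟩ : ∃ p, x = z * p := ⟨x / z, by field_simp⟩
  obtain ⟨q, rfl⟩ : ∃ q, Y = z ^ 2 * q := ⟨Y / z ^ 2, by field_simp⟩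
  obtain ⟨σ, rfl⟩ : ∃ σ, s = z ^ 2 * σ := ⟨s / z ^ 2, by field_simp⟩
  have hq : 9 ≤ q := by nlinarith
  have hqp : q ≤ p := by nlinarith
  have hq0 : 0 < q := by linarith
  have hp0 : 0 < p := by linarith
  calc _ = z ^ 4 * ((p - q) / (p * q) * (4 * p ^ 2 * q + 3 * σ - σ ^ 2)) := by field_simp
    _ ≤ z ^ 4 * ((p ^ 2 * q - p ^ 2 + q - p * q) - (p - q) * σ) :=
        mul_le_mul_of_nonneg_left (mul_quadratic_le_of_nine_le hq hqp) (by positivity)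
    _ = _ := by ring

lemma two_mul_mul_sub_le {X Y Z s : ℝ} (hZ : 0 < Z) (hZY : Z < Y) (hYX : Y < X) (hs : 0 < s) :
    2 * ((s + X) * (s + Y) * (2 - s / (2 * (s + X)) - s / (2 * (s + Y)) - 3 * s / (2 * (s + Z))))
      ≤ 4 * X * Y + 3 * Z * s - s ^ 2 := by
  have hY : 0 < Y := hZ.trans hZY
  have hX : 0 < X := hY.trans hYX
  have hgap : 0 ≤ 3 * s * (Y - Z) * ((X - Z) / (s + Z)) :=
    mul_nonneg (mul_nonneg (by positivity) (by linarith)) (div_nonneg (by linarith) (by positivity))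
  refine sub_nonneg.1 (hgap.trans_eq ?_)
  field_simp
  ring

lemma half_add_single_add_single_add_single :
    (fun _ ↦ 1 / 2) + Pi.single 0 1 + Pi.single 1 1 + Pi.single 2 1
      = (fun _ ↦ 3 / 2 : Fin 3 → ℝ) := by
  ext i; fin_cases i <;> simp <;> norm_num

lemma carlsonKernel_three_halves {k : ℕ} {X : Fin 3 → ℝ} {s : ℝ} (hX : ∀ i, 0 < X i)
    (hs : 0 < s) : carlsonKernel k (fun _ ↦ 3 / 2) X s
      = carlsonKernel k (fun _ ↦ 1 / 2) X s / (s + X 0) / (s + X 1) / (s + X 2) := by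
  rw [← half_add_single_add_single_add_single, carlsonKernel_add_single (add_pos hs (hX 2)),
    carlsonKernel_add_single (add_pos hs (hX 1)), carlsonKernel_add_single (add_pos hs (hX 0))]

lemma integrableOn_carlsonKernel_three_halves {k : ℕ} {X : Fin 3 → ℝ} (hk : k < 3)
    (hX : ∀ i, 0 < X i) : IntegrableOn (carlsonKernel k (fun _ ↦ 3 / 2) X) (Ioi 0) :=
  integrableOn_carlsonKernel (fun _ ↦ by norm_num)
    (by have : (k : ℝ) ≤ 2 := by exact_mod_cast Nat.le_of_lt_succ hk
        norm_num; linarith) hX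

lemma carlsonIntegral_three_halves_pos {k : ℕ} {X : Fin 3 → ℝ} (hk : k < 3) (hX : ∀ i, 0 < X i) :
    0 < carlsonIntegral k (fun _ ↦ 3 / 2) X :=
  setIntegral_Ioi_pos (integrableOn_carlsonKernel_three_halves hk hX)
    fun _ hs ↦ carlsonKernel_pos hX hs

lemma mul_ibp_kernel_le {x y z s : ℝ} (hz : 0 < z) (hzy : z < y) (hyx : y < x)
    (h9 : 9 * z ^ 2 ≤ y ^ 2) (hyxz : y ^ 2 ≤ x * z) (hs : 0 < s) :
    2 * ((x * z - y ^ 2) * z / (x * y ^ 2))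
        * (2 * carlsonKernel 1 ((fun _ ↦ 1 / 2) + Pi.single 2 1) ![x ^ 2, y ^ 2, z ^ 2] s
          - ∑ i, ((fun _ ↦ 1 / 2) + Pi.single 2 1 : Fin 3 → ℝ) i * carlsonKernel 2
            ((fun _ ↦ 1 / 2) + Pi.single 2 1 + Pi.single i 1) ![x ^ 2, y ^ 2, z ^ 2] s)
      ≤ (x ^ 2 * y ^ 2 - x ^ 2 * z ^ 2 + y ^ 2 * z ^ 2 - x * y ^ 2 * z)
          * carlsonKernel 1 (fun _ ↦ 3 / 2) ![x ^ 2, y ^ 2, z ^ 2] s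
        + (y ^ 2 - x * z) * carlsonKernel 2 (fun _ ↦ 3 / 2) ![x ^ 2, y ^ 2, z ^ 2] s := by
  have hy : 0 < y := hz.trans hzy
  have hx : 0 < x := hy.trans hyx
  set X : Fin 3 → ℝ := ![x ^ 2, y ^ 2, z ^ 2]
  have hX (i : Fin 3) : 0 < X i := by
    fin_cases i
    exacts [pow_pos hx 2, pow_pos hy 2, pow_pos hz 2]
  have hsX (i : Fin 3) : 0 < s + X i := add_pos hs (hX i)
  have hratio : 0 ≤ (x * z - y ^ 2) * z / (x * y ^ 2) :=
    div_nonneg (mul_nonneg (by linarith) hz.le) (by positivity)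
  have hbracket := (mul_le_mul_of_nonneg_left (two_mul_mul_sub_le (by positivity)
    (by gcongr : z ^ 2 < y ^ 2) (by gcongr : y ^ 2 < x ^ 2) hs) hratio).trans
    (mul_quadratic_le_of_nine_mul_sq_le hz h9 hyxz)
  have hw : 0 < carlsonKernel 0 (fun _ ↦ 1 / 2) X s := carlsonKernel_pos hX hs
  have hweight : 0 ≤ s * carlsonKernel 0 (fun _ ↦ 1 / 2) X s
      / ((s + x ^ 2) * (s + y ^ 2) * (s + z ^ 2)) := by positivity
  have hkernel₁ : carlsonKernel 1 (fun _ ↦ 1 / 2) X s = s * carlsonKernel 0 (fun _ ↦ 1 / 2) X s :=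
    carlsonKernel_succ
  have hkernel₂ : carlsonKernel 2 (fun _ ↦ 1 / 2) X s = s * carlsonKernel 1 (fun _ ↦ 1 / 2) X s :=
    carlsonKernel_succ
  refine Eq.trans_le ?_ ((mul_le_mul_of_nonneg_left hbracket hweight).trans_eq ?_)
  · simp only [Fin.sum_univ_three, carlsonKernel_add_single (hsX _), hkernel₂, hkernel₁]
    simp only [X, Matrix.cons_val, Pi.add_apply, Pi.single_eq_same, Pi.single_eq_of_ne,
      ne_eq, Fin.reduceEq, not_false_eq_true, add_zero]
    field_simp
    ring
  · simp only [carlsonKernel_three_halves hX hs, hkernel₂, hkernel₁]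
    simp only [X, Matrix.cons_val]
    field_simp
    ring

-- A suitable multiple of the derivative of `s² / ((s + z²) Δ(s))`, which integrates to zero, lies
-- below the integrand.
lemma typeS_bracket_nonneg {x y z : ℝ} (hz : 0 < z) (hzy : z < y) (hyx : y < x)
    (h9 : 9 * z ^ 2 ≤ y ^ 2) :
    0 ≤ (x ^ 2 * y ^ 2 - x ^ 2 * z ^ 2 + y ^ 2 * z ^ 2 - x * y ^ 2 * z)
        * carlsonIntegral 1 (fun _ ↦ 3 / 2) ![x ^ 2, y ^ 2, z ^ 2]
      + (y ^ 2 - x * z) * carlsonIntegral 2 (fun _ ↦ 3 / 2) ![x ^ 2, y ^ 2, z ^ 2] := by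
  have hy : 0 < y := hz.trans hzy
  have hx : 0 < x := hy.trans hyx
  set X : Fin 3 → ℝ := ![x ^ 2, y ^ 2, z ^ 2]
  have hX (i : Fin 3) : 0 < X i := by
    fin_cases i
    exacts [pow_pos hx 2, pow_pos hy 2, pow_pos hz 2]
  rcases le_or_gt (x * z) (y ^ 2) with hxz | hxz
  · have hJ₁ := carlsonIntegral_three_halves_pos (k := 1) (by norm_num) hX
    have hJ₂ := carlsonIntegral_three_halves_pos (k := 2) (by norm_num) hX
    have hcoeff : 0 ≤ x ^ 2 * y ^ 2 - x ^ 2 * z ^ 2 + y ^ 2 * z ^ 2 - x * y ^ 2 * z := by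
      nlinarith [mul_pos hx hz, mul_nonneg (sq_nonneg y) (sq_nonneg (x - z))]
    have hcoeff' : 0 ≤ y ^ 2 - x * z := by linarith
    positivity
  set a : Fin 3 → ℝ := (fun _ ↦ 1 / 2) + Pi.single 2 1
  have ha : 0 ≤ a := add_single_nonneg half_nonneg 2
  have hasum : 2 < ∑ i, a i := by rw [sum_add_single]; norm_num
  have hint : IntegrableOn (fun s ↦ 2 * carlsonKernel 1 a X s) (Ioi 0) :=
    (integrableOn_carlsonKernel ha (by norm_num; linarith) hX).const_mul 2
  have hint' (i : Fin 3) :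
      IntegrableOn (fun s ↦ a i * carlsonKernel 2 (a + Pi.single i 1) X s) (Ioi 0) :=
    (integrableOn_carlsonKernel (add_single_nonneg ha i)
      (by rw [sum_add_single]; norm_num; linarith) hX).const_mul (a i)
  have hsumint := integrable_finsetSum Finset.univ fun i _ ↦ hint' i
  have hibp : ∫ s in Ioi (0 : ℝ), (2 * carlsonKernel 1 a X s
      - ∑ i, a i * carlsonKernel 2 (a + Pi.single i 1) X s) = 0 := by
    rw [integral_sub hint hsumint, integral_finsetSum _ fun i _ ↦ hint' i]
    simp only [integral_const_mul]
    have := add_one_mul_carlsonIntegral (k := 1) ha (by norm_num; linarith) hX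
    norm_num at this
    exact sub_eq_zero.2 this
  have hint₁ := integrableOn_carlsonKernel_three_halves (k := 1) (by norm_num) hX
  have hint₂ := integrableOn_carlsonKernel_three_halves (k := 2) (by norm_num) hX
  have hmono := setIntegral_mono_on ((hint.sub hsumint).const_mul _)
    ((hint₁.const_mul _).add (hint₂.const_mul _)) measurableSet_Ioi
    fun s hs ↦ mul_ibp_kernel_le hz hzy hyx h9 hxz.le hs
  simp only [Pi.sub_apply, Pi.add_apply] at hmono
  rw [integral_const_mul, hibp, mul_zero, integral_add (hint₁.const_mul _) (hint₂.const_mul _),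
    integral_const_mul, integral_const_mul] at hmono
  exact hmono

end SemiaxisRatio

section ForceBalance

open Set

variable {g x y z : ℝ}

lemma sq_apply_pos {ι : Type*} {b : ι → ℝ} (hb : ∀ i, 0 < b i) (i : ι) : 0 < (b ^ 2) i :=
  pow_pos (hb i) 2

lemma carlsonIntegral_const_vec_three (k : ℕ) (r : ℝ) {X Y Z : ℝ} (hX : 0 ≤ X) (hY : 0 ≤ Y)
    (hZ : 0 ≤ Z) : carlsonIntegral k (fun _ ↦ r) ![X, Y, Z]
      = ∫ s in Ioi (0 : ℝ), s ^ k * ((s + X) * (s + Y) * (s + Z)) ^ (-r) := by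
  refine setIntegral_congr_fun measurableSet_Ioi fun s hs ↦ ?_
  have hs : 0 < s := hs
  simp only [carlsonKernel, Fin.prod_univ_three, Matrix.cons_val]
  rw [mul_rpow (by positivity) (by positivity), mul_rpow (by positivity) (by positivity)]

lemma riC1_eq_carlsonIntegral :
    riC1 g x y z = 2 * π * g * carlsonIntegral 1 (fun _ ↦ 3 / 2) ![x ^ 2, y ^ 2, z ^ 2] := by
  rw [carlsonIntegral_const_vec_three _ _ (sq_nonneg x) (sq_nonneg y) (sq_nonneg z)]
  simp only [riC1, neg_div, pow_one]

lemma riC2_eq_carlsonIntegral :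
    riC2 g x y z = 2 * π * g * carlsonIntegral 2 (fun _ ↦ 3 / 2) ![x ^ 2, y ^ 2, z ^ 2] := by
  rw [carlsonIntegral_const_vec_three _ _ (sq_nonneg x) (sq_nonneg y) (sq_nonneg z)]
  simp only [riC2, neg_div]

lemma carlsonIntegral_one_half_add_single_add_single {X : Fin 3 → ℝ} (hX : ∀ i, 0 < X i)
    {i j k : Fin 3} (hijk : (fun _ ↦ 1 / 2 : Fin 3 → ℝ) + Pi.single i 1 + Pi.single j 1
      + Pi.single k 1 = fun _ ↦ 3 / 2) :
    carlsonIntegral 1 ((fun _ ↦ 1 / 2) + Pi.single i 1 + Pi.single j 1) X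
      = carlsonIntegral 2 (fun _ ↦ 3 / 2) X + X k * carlsonIntegral 1 (fun _ ↦ 3 / 2) X := by
  rw [← hijk]
  exact carlsonIntegral_eq_add (add_single_nonneg (add_single_nonneg half_nonneg i) j)
    (by rw [sum_add_single, sum_add_single]; norm_num) hX k

lemma indexSymbol_zero_sub_one {X : Fin 3 → ℝ} (hX : ∀ i, 0 < X i) :
    indexSymbol X 0 - indexSymbol X 1 = (X 0 - X 1) * (carlsonIntegral 2 (fun _ ↦ 3 / 2) X
      + X 2 * carlsonIntegral 1 (fun _ ↦ 3 / 2) X) := by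
  rw [indexSymbol_sub hX, carlsonIntegral_one_half_add_single_add_single hX
    half_add_single_add_single_add_single]

lemma indexSymbol_one_sub_two {X : Fin 3 → ℝ} (hX : ∀ i, 0 < X i) :
    indexSymbol X 1 - indexSymbol X 2 = (X 1 - X 2) * (carlsonIntegral 2 (fun _ ↦ 3 / 2) X
      + X 0 * carlsonIntegral 1 (fun _ ↦ 3 / 2) X) := by
  rw [indexSymbol_sub hX, carlsonIntegral_one_half_add_single_add_single (k := 0) hX]
  rw [← half_add_single_add_single_add_single]
  abel

lemma GSp_eq_mul_indexSymbol {b : Fin 3 → ℝ} (hb : ∀ i, 0 < b i) :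
    GSp g (b 0) (b 1) (b 2) = 2 * π * g * (b 0 - b 2) ^ 3
      * ((indexSymbol (b ^ 2) 0 - indexSymbol (b ^ 2) 1) / b 0
        + (indexSymbol (b ^ 2) 1 - indexSymbol (b ^ 2) 2) / b 2) := by
  have h₀ := (hb 0).ne'
  have h₂ := (hb 2).ne'
  have hvec : ![b 0 ^ 2, b 1 ^ 2, b 2 ^ 2] = b ^ 2 := by
    ext i; fin_cases i <;> rfl
  rw [indexSymbol_zero_sub_one (sq_apply_pos hb), indexSymbol_one_sub_two (sq_apply_pos hb), GSp,
    riC1_eq_carlsonIntegral, riC2_eq_carlsonIntegral, hvec]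
  simp only [Pi.pow_apply]
  field_simp
  ring

lemma GSm_eq_mul_indexSymbol {b : Fin 3 → ℝ} (hb : ∀ i, 0 < b i) :
    GSm g (b 0) (b 1) (b 2) = 2 * π * g * (b 0 + b 2) ^ 3
      * ((indexSymbol (b ^ 2) 0 - indexSymbol (b ^ 2) 1) / b 0
        - (indexSymbol (b ^ 2) 1 - indexSymbol (b ^ 2) 2) / b 2) := by
  have h₀ := (hb 0).ne'
  have h₂ := (hb 2).ne'
  have hvec : ![b 0 ^ 2, b 1 ^ 2, b 2 ^ 2] = b ^ 2 := by
    ext i; fin_cases i <;> rfl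
  rw [indexSymbol_zero_sub_one (sq_apply_pos hb), indexSymbol_one_sub_two (sq_apply_pos hb), GSm,
    riC1_eq_carlsonIntegral, riC2_eq_carlsonIntegral, hvec]
  simp only [Pi.pow_apply]
  field_simp
  ring

lemma sq_le_nine_mul_sq_of_GSm_pos (hg : 0 < g) (hz : 0 < z) (hzy : z < y) (hyx : y < x)
    (hG : 0 < GSm g x y z) : y ^ 2 ≤ 9 * z ^ 2 := by
  by_contra! h9
  have hx : 0 < x := hz.trans (hzy.trans hyx)
  have hfactor : 0 ≤ (x + z) ^ 4 / (x * z) * (2 * π * g) := by positivity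
  have hbracket := mul_nonneg hfactor (typeS_bracket_nonneg hz hzy hyx h9.le)
  rw [GSm, riC1_eq_carlsonIntegral, riC2_eq_carlsonIntegral] at hG
  linarith

end ForceBalance

section EffectivePotential

open Filter Topology

/-- The rotational energy of the reduced Hamiltonian in one principal plane with semiaxes `u`, `v`
and angular momenta `m`, `n`, split along the sum and the difference of the momenta. -/
noncomputable def rotEnergy (u v m n : ℝ) : ℝ :=
  ((m + n) ^ 2 / (u - v) ^ 2 + (m - n) ^ 2 / (u + v) ^ 2) / 4

/-- The potential governing the semiaxes `b` of an ellipsoid rotating about its middle axis with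
angular momenta `m`, `n`; `κ` stands for `2πg`. -/
noncomputable def effectivePotential (κ m n : ℝ) (b : Fin 3 → ℝ) : ℝ :=
  rotEnergy (b 0) (b 2) m n - κ * gravityIntegral (b ^ 2)

/-- The derivative of `effectivePotential` along `bᵢ ↦ bᵢ exp (t vᵢ)`. -/
noncomputable def effectivePotentialDeriv (κ m n : ℝ) (v b : Fin 3 → ℝ) : ℝ :=
  κ * ∑ i, v i * indexSymbol (b ^ 2) i
    - ((m + n) ^ 2 * ((v 0 * b 0 - v 2 * b 2) / (b 0 - b 2) ^ 3)
      + (m - n) ^ 2 * ((v 0 * b 0 + v 2 * b 2) / (b 0 + b 2) ^ 3)) / 2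

/-- The second derivative of `effectivePotential` along `bᵢ ↦ bᵢ exp (t vᵢ)`. -/
noncomputable def effectivePotentialDeriv₂ (κ m n : ℝ) (v b : Fin 3 → ℝ) : ℝ :=
  κ * ∑ i, v i * (2 * v i * indexSymbol (b ^ 2) i
      - ∑ j, (1 + 2 * (Pi.single i 1 : Fin 3 → ℝ) j) * v j * indexSymbol₂ (b ^ 2) i j)
    - ((m + n) ^ 2 * ((v 0 ^ 2 * b 0 - v 2 ^ 2 * b 2) / (b 0 - b 2) ^ 3
        - 3 * (v 0 * b 0 - v 2 * b 2) ^ 2 / (b 0 - b 2) ^ 4)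
      + (m - n) ^ 2 * ((v 0 ^ 2 * b 0 + v 2 ^ 2 * b 2) / (b 0 + b 2) ^ 3
        - 3 * (v 0 * b 0 + v 2 * b 2) ^ 2 / (b 0 + b 2) ^ 4)) / 2

variable {κ m n : ℝ}

lemma hasDerivAt_const_div_sq {w : ℝ → ℝ} {w' c t : ℝ} (hw : HasDerivAt w w' t) (h0 : w t ≠ 0) :
    HasDerivAt (fun t ↦ c / w t ^ 2) (-2 * c * (w' / w t ^ 3)) t := by
  refine ((hasDerivAt_const t c).div (hw.pow 2) (pow_ne_zero 2 h0)).congr_deriv ?_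
  simp only [Pi.pow_apply]
  field_simp
  ring

lemma hasDerivAt_div_cube {w w' : ℝ → ℝ} {w'' t : ℝ} (hw : HasDerivAt w (w' t) t)
    (hw' : HasDerivAt w' w'' t) (h0 : w t ≠ 0) :
    HasDerivAt (fun t ↦ w' t / w t ^ 3) (w'' / w t ^ 3 - 3 * w' t ^ 2 / w t ^ 4) t := by
  refine (hw'.div (hw.pow 3) (pow_ne_zero 3 h0)).congr_deriv ?_
  simp only [Pi.pow_apply]
  field_simp
  ring

section Curve

variable {b : ℝ → Fin 3 → ℝ} {v : Fin 3 → ℝ} {t : ℝ}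

lemma hasDerivAt_sq_curve (hderiv : HasDerivAt b (v * b t) t) :
    HasDerivAt (fun t ↦ b t ^ 2) (fun i ↦ 2 * v i * (b t ^ 2) i) t := by
  refine (hderiv.pow 2).congr_deriv ?_
  ext i
  simp only [Pi.mul_apply, Pi.pow_apply, Pi.ofNat_apply, Nat.cast_ofNat]
  ring

lemma hasDerivAt_effectivePotential (hb : ∀ i, 0 < b t i) (hb₀₂ : b t 2 < b t 0)
    (hderiv : HasDerivAt b (v * b t) t) :
    HasDerivAt (fun t ↦ effectivePotential κ m n (b t))
      (effectivePotentialDeriv κ m n v (b t)) t := by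
  have hcoord := hasDerivAt_pi.1 hderiv
  have hrot := ((hasDerivAt_const_div_sq (c := (m + n) ^ 2) ((hcoord 0).sub (hcoord 2))
    (sub_pos.2 hb₀₂).ne').add (hasDerivAt_const_div_sq (c := (m - n) ^ 2)
    ((hcoord 0).add (hcoord 2)) (add_pos (hb 0) (hb 2)).ne')).div_const 4
  have hgrav := hasDerivAt_gravityIntegral (by simp) (sq_apply_pos hb)
    (hasDerivAt_sq_curve hderiv)
  refine (hrot.sub (hgrav.const_mul κ)).congr_deriv ?_
  simp only [effectivePotentialDeriv, Pi.mul_apply, Pi.sub_apply, Pi.add_apply]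
  ring

lemma hasDerivAt_effectivePotentialDeriv (hb : ∀ i, 0 < b t i) (hb₀₂ : b t 2 < b t 0)
    (hderiv : HasDerivAt b (v * b t) t) :
    HasDerivAt (fun t ↦ effectivePotentialDeriv κ m n v (b t))
      (effectivePotentialDeriv₂ κ m n v (b t)) t := by
  have hcoord := hasDerivAt_pi.1 hderiv
  have hsub := hasDerivAt_div_cube (w' := fun t ↦ v 0 * b t 0 - v 2 * b t 2)
    ((hcoord 0).sub (hcoord 2)) (((hcoord 0).const_mul (v 0)).sub ((hcoord 2).const_mul (v 2)))
    (sub_pos.2 hb₀₂).ne'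
  have hadd := hasDerivAt_div_cube (w' := fun t ↦ v 0 * b t 0 + v 2 * b t 2)
    ((hcoord 0).add (hcoord 2)) (((hcoord 0).const_mul (v 0)).add ((hcoord 2).const_mul (v 2)))
    (add_pos (hb 0) (hb 2)).ne'
  have hindex := HasDerivAt.fun_sum (u := Finset.univ) fun i _ ↦
    (hasDerivAt_indexSymbol (sq_apply_pos hb) (hasDerivAt_sq_curve hderiv) i).const_mul (v i)
  refine ((hindex.const_mul κ).sub (((hsub.const_mul ((m + n) ^ 2)).add
    (hadd.const_mul ((m - n) ^ 2))).div_const 2)).congr_deriv ?_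
  simp only [effectivePotentialDeriv₂, Pi.mul_apply, Pi.sub_apply, Pi.add_apply]
  ring

end Curve

/-- The balance of gravity and rotation for an ellipsoid with semiaxes `b` rotating about its middle
axis, solved for the squared sum and difference of the angular momenta `m`, `n`. -/
structure IsBalanced (κ m n : ℝ) (b : Fin 3 → ℝ) : Prop where
  add_sq : (m + n) ^ 2 = κ * (b 0 - b 2) ^ 3
    * ((indexSymbol (b ^ 2) 0 - indexSymbol (b ^ 2) 1) / b 0
      + (indexSymbol (b ^ 2) 1 - indexSymbol (b ^ 2) 2) / b 2)
  sub_sq : (m - n) ^ 2 = κ * (b 0 + b 2) ^ 3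
    * ((indexSymbol (b ^ 2) 0 - indexSymbol (b ^ 2) 1) / b 0
      - (indexSymbol (b ^ 2) 1 - indexSymbol (b ^ 2) 2) / b 2)

variable {b v : Fin 3 → ℝ}

lemma IsBalanced.effectivePotentialDeriv_eq_zero (hbal : IsBalanced κ m n b) (hb : ∀ i, 0 < b i)
    (hb₀₂ : b 2 < b 0) (hv : ∑ i, v i = 0) : effectivePotentialDeriv κ m n v b = 0 := by
  have h₀ := (hb 0).ne'
  have h₂ := (hb 2).ne'
  have hsub : b 0 - b 2 ≠ 0 := (sub_pos.2 hb₀₂).ne'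
  have hadd : b 0 + b 2 ≠ 0 := (add_pos (hb 0) (hb 2)).ne'
  have hv₁ : v 1 = -v 0 - v 2 := by
    rw [Fin.sum_univ_three] at hv
    linarith
  rw [effectivePotentialDeriv, hbal.add_sq, hbal.sub_sq, Fin.sum_univ_three, hv₁]
  field_simp
  ring

lemma indexSymbol_secondVariation_pos (hb₂ : 0 < b 2) (hb₂₁ : b 2 < b 1) (hb₁₀ : b 1 < b 0)
    (h9 : b 1 ^ 2 ≤ 9 * b 2 ^ 2) (hv : ∑ i, v i = 0) (hv0 : v ≠ 0) :
    0 < 2 * (indexSymbol (b ^ 2) 0 - indexSymbol (b ^ 2) 1) * v 0 ^ 2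
      - 2 * (indexSymbol (b ^ 2) 1 - indexSymbol (b ^ 2) 2) * v 2 ^ 2
      + 3 * (indexSymbol (b ^ 2) 1 - indexSymbol₂ (b ^ 2) 0 2) * (v 0 - v 2) ^ 2
      + ∑ i, v i * (2 * v i * indexSymbol (b ^ 2) i
        - ∑ j, (1 + 2 * (Pi.single i 1 : Fin 3 → ℝ) j) * v j * indexSymbol₂ (b ^ 2) i j) := by
  have hb₁ : 0 < b 1 := hb₂.trans hb₂₁
  have hb₀ : 0 < b 0 := hb₁.trans hb₁₀
  have hb := forall_pos_of_lt_of_lt hb₂ hb₂₁ hb₁₀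
  have hv₁ : v 1 = -v 0 - v 2 := by
    rw [Fin.sum_univ_three] at hv
    linarith
  have hv' : v 0 ≠ 0 ∨ v 2 ≠ 0 := by
    contrapose! hv0
    ext i
    fin_cases i <;> simp [hv₁, hv0]
  refine (indexSymbol_form_pos (X := b ^ 2) (sq_apply_pos hb)
    (c := ![4 * v 0 ^ 2, 3 * (v 0 - v 2) ^ 2 + 2 * v 1 ^ 2 - 2 * v 0 ^ 2 - 2 * v 2 ^ 2,
      4 * v 2 ^ 2])
    (d := ![![-3 * v 0 ^ 2, -v 0 * v 1, -v 0 * v 2 - 3 * (v 0 - v 2) ^ 2],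
      ![-v 0 * v 1, -3 * v 1 ^ 2, -v 1 * v 2], ![-v 0 * v 2, -v 1 * v 2, -3 * v 2 ^ 2]])
    fun s hs ↦ ?_).trans_eq ?_
  · have hsq₂₁ : (b ^ 2) 2 < (b ^ 2) 1 := pow_lt_pow_left₀ hb₂₁ hb₂.le two_ne_zero
    have hsq₁₀ : (b ^ 2) 1 < (b ^ 2) 0 := pow_lt_pow_left₀ hb₁₀ hb₁.le two_ne_zero
    refine (secondVariation_div_pos hs (sq_apply_pos hb 2) hsq₂₁ hsq₁₀ h9 hv').trans_eq ?_
    have hcompl (i : Fin 3) : (b ^ 2) i / (s + (b ^ 2) i) = 1 - s / (s + (b ^ 2) i) := by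
      have := (add_pos hs (sq_apply_pos hb i)).ne'
      field_simp
      ring
    simp only [hcompl, secondVariation, Fin.sum_univ_three, Matrix.cons_val, hv₁]
    ring
  · simp only [Fin.sum_univ_three, Matrix.cons_val, Pi.single_eq_same, Pi.single_eq_of_ne, ne_eq,
      Fin.reduceEq, not_false_eq_true, zero_ne_one, one_ne_zero, mul_zero, add_zero, mul_one]
    ring

lemma IsBalanced.effectivePotentialDeriv₂_eq (hbal : IsBalanced κ m n b) (hb : ∀ i, 0 < b i)
    (hb₀₂ : b 2 < b 0) : effectivePotentialDeriv₂ κ m n v b = κ *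
      (2 * (indexSymbol (b ^ 2) 0 - indexSymbol (b ^ 2) 1) * v 0 ^ 2
      - 2 * (indexSymbol (b ^ 2) 1 - indexSymbol (b ^ 2) 2) * v 2 ^ 2
      + 3 * (indexSymbol (b ^ 2) 1 - indexSymbol₂ (b ^ 2) 0 2) * (v 0 - v 2) ^ 2
      + ∑ i, v i * (2 * v i * indexSymbol (b ^ 2) i
        - ∑ j, (1 + 2 * (Pi.single i 1 : Fin 3 → ℝ) j) * v j * indexSymbol₂ (b ^ 2) i j)) := by
  have h₀ := (hb 0).ne'
  have h₂ := (hb 2).ne'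
  have hsub : b 0 - b 2 ≠ 0 := (sub_pos.2 hb₀₂).ne'
  have hadd : b 0 + b 2 ≠ 0 := (add_pos (hb 0) (hb 2)).ne'
  have hcross := mul_indexSymbol_sub (sq_apply_pos hb) 0 2
  have hcross' : indexSymbol₂ (b ^ 2) 0 2 = (b 0 ^ 2 * indexSymbol (b ^ 2) 2
      - b 2 ^ 2 * indexSymbol (b ^ 2) 0) / ((b 0 - b 2) * (b 0 + b 2)) := by
    rw [eq_div_iff (mul_ne_zero hsub hadd)]
    simp only [Pi.pow_apply] at hcross
    linear_combination hcross
  rw [effectivePotentialDeriv₂, hbal.add_sq, hbal.sub_sq]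
  generalize ∑ i, v i * _ = S
  rw [hcross']
  field_simp
  ring

end EffectivePotential

section StrictMinimum

open Filter Topology

variable {κ m n : ℝ} {b : Fin 3 → ℝ}

lemma contDiffAt_gravityIntegral {ι : Type*} [Fintype ι] (k : ℕ) (hι : 2 < Fintype.card ι)
    {X : ι → ℝ} (hX : ∀ i, 0 < X i) : ContDiffAt ℝ k gravityIntegral X := by
  refine contDiffAt_carlsonIntegral k half_nonneg ?_ hX
  simp only [Finset.sum_const, Finset.card_univ, nsmul_eq_mul, Nat.cast_zero]
  linarith [(Nat.ofNat_lt_cast (α := ℝ)).2 hι]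

lemma contDiffAt_effectivePotential (k : ℕ) (hb : ∀ i, 0 < b i) (hb₀₂ : b 2 < b 0) :
    ContDiffAt ℝ k (effectivePotential κ m n) b := by
  have hcoord (i : Fin 3) : ContDiffAt ℝ k (fun b : Fin 3 → ℝ ↦ b i) b :=
    (contDiff_apply ℝ ℝ i).contDiffAt
  have hgrav : ContDiffAt ℝ k (fun b : Fin 3 → ℝ ↦ gravityIntegral (b ^ 2)) b :=
    (contDiffAt_gravityIntegral k (by simp) (sq_apply_pos hb)).comp b (contDiffAt_id.pow 2)
  have hsub : (b 0 - b 2) ^ 2 ≠ 0 := pow_ne_zero 2 (sub_pos.2 hb₀₂).ne'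
  have hadd : (b 0 + b 2) ^ 2 ≠ 0 := pow_ne_zero 2 (add_pos (hb 0) (hb 2)).ne'
  exact (((contDiffAt_const.div (((hcoord 0).sub (hcoord 2)).pow 2) hsub).add
    (contDiffAt_const.div (((hcoord 0).add (hcoord 2)).pow 2) hadd)).div_const 4).sub
    (contDiffAt_const.mul hgrav)

lemma hasDerivAt_mul_exp_mul {ι : Type*} [Finite ι] (b v : ι → ℝ) (t : ℝ) :
    HasDerivAt (fun t i ↦ b i * exp (t * v i)) (v * fun i ↦ b i * exp (t * v i)) t := by
  cases nonempty_fintype ι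
  refine hasDerivAt_pi.2 fun i ↦ ?_
  refine (((hasDerivAt_id t).mul_const (v i)).exp.const_mul (b i)).congr_deriv ?_
  simp only [id, Pi.mul_apply]
  ring

lemma deriv_effectivePotential_mul_exp {v : Fin 3 → ℝ} (hb : ∀ i, 0 < b i) (hb₀₂ : b 2 < b 0) :
    deriv (fun t : ℝ ↦ effectivePotential κ m n fun i ↦ b i * exp (t * v i))
      =ᶠ[𝓝 0] fun t ↦ effectivePotentialDeriv κ m n v fun i ↦ b i * exp (t * v i) := by
  have hcont : ContinuousAt (fun (t : ℝ) i ↦ b i * exp (t * v i)) 0 :=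
    (hasDerivAt_mul_exp_mul b v 0).continuousAt
  have hlt : ∀ᶠ t : ℝ in 𝓝 0, b 2 * exp (t * v 2) < b 0 * exp (t * v 0) :=
    (continuousAt_pi.1 hcont 2).eventually_lt (continuousAt_pi.1 hcont 0) (by simpa using hb₀₂)
  filter_upwards [hlt] with t ht
  exact (hasDerivAt_effectivePotential (fun i ↦ mul_pos (hb i) (exp_pos _)) ht
    (hasDerivAt_mul_exp_mul b v t)).deriv

lemma IsBalanced.deriv_effectivePotential_mul_exp_eq_zero (hbal : IsBalanced κ m n b)
    (hb : ∀ i, 0 < b i) (hb₀₂ : b 2 < b 0) {v : Fin 3 → ℝ} (hv : ∑ i, v i = 0) :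
    deriv (fun t : ℝ ↦ effectivePotential κ m n fun i ↦ b i * exp (t * v i)) 0 = 0 := by
  rw [(deriv_effectivePotential_mul_exp hb hb₀₂).eq_of_nhds]
  simpa using hbal.effectivePotentialDeriv_eq_zero hb hb₀₂ hv

lemma deriv_deriv_effectivePotential_mul_exp {v : Fin 3 → ℝ} (hb : ∀ i, 0 < b i)
    (hb₀₂ : b 2 < b 0) :
    deriv (deriv fun t : ℝ ↦ effectivePotential κ m n fun i ↦ b i * exp (t * v i)) 0
      = effectivePotentialDeriv₂ κ m n v b := by
  rw [EventuallyEq.deriv_eq (deriv_effectivePotential_mul_exp hb hb₀₂),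
    (hasDerivAt_effectivePotentialDeriv (fun i ↦ mul_pos (hb i) (exp_pos _)) (by simpa using hb₀₂)
      (hasDerivAt_mul_exp_mul b v 0)).deriv]
  simp

/-- The deformation of an ellipsoid with semiaxes `b` that preserves its volume and has the
logarithmic strains `v` along the outer two axes. -/
noncomputable def isochoricStretch (b : Fin 3 → ℝ) (v : ℝ × ℝ) : Fin 3 → ℝ :=
  fun i ↦ b i * exp (![v.1, -v.1 - v.2, v.2] i)

lemma isochoricStretch_zero (b : Fin 3 → ℝ) : isochoricStretch b 0 = b := by
  ext i
  fin_cases i <;> simp [isochoricStretch]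

lemma isochoricStretch_smul (b : Fin 3 → ℝ) (v : ℝ × ℝ) (t : ℝ) :
    isochoricStretch b (t • v) = fun i ↦ b i * exp (t * ![v.1, -v.1 - v.2, v.2] i) := by
  ext i
  fin_cases i <;> simp [isochoricStretch, mul_sub]

lemma contDiff_isochoricStretch (b : Fin 3 → ℝ) : ContDiff ℝ 2 (isochoricStretch b) := by
  refine contDiff_pi.2 fun i ↦ contDiff_const.mul (ContDiff.exp ?_)
  fin_cases i
  exacts [contDiff_fst, contDiff_fst.neg.sub contDiff_snd, contDiff_snd]

lemma isochoricStretch_log_div {c : Fin 3 → ℝ} (hb : ∀ i, 0 < b i) (hc : ∀ i, 0 < c i)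
    (hcb : ∏ i, c i = ∏ i, b i) :
    isochoricStretch b (log (c 0 / b 0), log (c 2 / b 2)) = c := by
  have hb' (i : Fin 3) : b i ≠ 0 := (hb i).ne'
  have hc' (i : Fin 3) : c i ≠ 0 := (hc i).ne'
  have hdiv (i : Fin 3) : b i * exp (log (c i / b i)) = c i := by
    rw [exp_log (div_pos (hc i) (hb i)), mul_div_cancel₀ _ (hb' i)]
  have hlog : -log (c 0 / b 0) - log (c 2 / b 2) = log (c 1 / b 1) := by
    have hprod := congrArg log hcb
    simp only [Fin.prod_univ_three, log_mul, log_div, hb', hc', ne_eq, mul_eq_zero, or_self,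
      not_false_eq_true] at hprod ⊢
    linarith
  ext i
  fin_cases i
  · exact hdiv 0
  · exact (congrArg (fun x ↦ b 1 * exp x) hlog).trans (hdiv 1)
  · exact hdiv 2

lemma IsBalanced.eventually_effectivePotential_isochoricStretch (hbal : IsBalanced κ m n b)
    (hκ : 0 < κ) (hb₂ : 0 < b 2) (hb₂₁ : b 2 < b 1) (hb₁₀ : b 1 < b 0)
    (h9 : b 1 ^ 2 ≤ 9 * b 2 ^ 2) : ∀ᶠ v in 𝓝[≠] 0,
      effectivePotential κ m n b < effectivePotential κ m n (isochoricStretch b v) := by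
  have hb₀₂ : b 2 < b 0 := hb₂₁.trans hb₁₀
  have hb := forall_pos_of_lt_of_lt hb₂ hb₂₁ hb₁₀
  have htrace (v : ℝ × ℝ) : ∑ i, ![v.1, -v.1 - v.2, v.2] i = 0 := by
    simp only [Fin.sum_univ_three, Matrix.cons_val]
    ring
  have hsmooth :
      ContDiffAt ℝ 2 (fun v ↦ effectivePotential κ m n (isochoricStretch b v)) 0 := by
    refine ContDiffAt.comp (g := effectivePotential κ m n) 0 ?_
      (contDiff_isochoricStretch b).contDiffAt
    rw [isochoricStretch_zero]
    exact contDiffAt_effectivePotential 2 hb hb₀₂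
  rw [show effectivePotential κ m n b = effectivePotential κ m n (isochoricStretch b 0) by
    rw [isochoricStretch_zero]]
  refine eventually_lt_of_deriv_deriv_line_pos hsmooth (fun v ↦ ?_) fun v hv ↦ ?_ <;>
    simp only [zero_add, isochoricStretch_smul]
  · exact hbal.deriv_effectivePotential_mul_exp_eq_zero hb hb₀₂ (htrace v)
  · rw [deriv_deriv_effectivePotential_mul_exp hb hb₀₂, hbal.effectivePotentialDeriv₂_eq hb hb₀₂]
    refine mul_pos hκ (indexSymbol_secondVariation_pos hb₂ hb₂₁ hb₁₀ h9 (htrace v) ?_)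
    contrapose! hv
    exact Prod.ext (congrFun hv 0) (congrFun hv 2)

lemma IsBalanced.eventually_effectivePotential_lt (hbal : IsBalanced κ m n b) (hκ : 0 < κ)
    (hb₂ : 0 < b 2) (hb₂₁ : b 2 < b 1) (hb₁₀ : b 1 < b 0) (h9 : b 1 ^ 2 ≤ 9 * b 2 ^ 2) :
    ∀ᶠ c in 𝓝 b, ∏ i, c i = ∏ i, b i → c ≠ b →
      effectivePotential κ m n b < effectivePotential κ m n c := by
  have hb := forall_pos_of_lt_of_lt hb₂ hb₂₁ hb₁₀
  have hlog (i : Fin 3) : ContinuousAt (fun c : Fin 3 → ℝ ↦ log (c i / b i)) b :=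
    ((continuousAt_apply i b).div_const _).log (div_pos (hb i) (hb i)).ne'
  have hstrain : Tendsto (fun c : Fin 3 → ℝ ↦ (log (c 0 / b 0), log (c 2 / b 2))) (𝓝 b) (𝓝 0) := by
    refine ((hlog 0).prodMk (hlog 2)).tendsto.trans_eq ?_
    simp [div_self (hb _).ne']
  have hpos : ∀ᶠ c in 𝓝 b, ∀ i, 0 < c i :=
    eventually_all.2 fun i ↦ (continuousAt_apply i b).eventually_const_lt (hb i)
  have hmin := hbal.eventually_effectivePotential_isochoricStretch hκ hb₂ hb₂₁ hb₁₀ h9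
  filter_upwards [hpos, hstrain.eventually (eventually_nhdsWithin_iff.1 hmin)] with c hc hlt hcb hne
  rw [isochoricStretch_log_div hb hc hcb] at hlt
  refine hlt fun h0 ↦ hne ?_
  rw [← isochoricStretch_log_div hb hc hcb, Set.mem_singleton_iff.1 h0, isochoricStretch_zero]

end StrictMinimum

section TransverseStability

open Filter Topology

/-- The coefficient of `(m ^ 2 + n ^ 2) / 2` in `rotEnergy u v m n`. -/
noncomputable def selfCoupling (u v : ℝ) : ℝ := (1 / (u - v) ^ 2 + 1 / (u + v) ^ 2) / 2

/-- The coefficient of `m * n` in `rotEnergy u v m n`. -/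
noncomputable def crossCoupling (u v : ℝ) : ℝ := (1 / (u - v) ^ 2 - 1 / (u + v) ^ 2) / 2

lemma rotEnergy_eq_coupling (u v m n : ℝ) :
    rotEnergy u v m n =
      (selfCoupling u v * (m ^ 2 + n ^ 2) + 2 * crossCoupling u v * m * n) / 2 := by
  simp only [rotEnergy, selfCoupling, crossCoupling]
  ring

lemma selfCoupling_neg (u v : ℝ) : selfCoupling u (-v) = selfCoupling u v := by
  rw [selfCoupling, selfCoupling, sub_neg_eq_add, ← sub_eq_add_neg, add_comm]

lemma crossCoupling_neg (u v : ℝ) : crossCoupling u (-v) = -crossCoupling u v := by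
  rw [crossCoupling, crossCoupling, sub_neg_eq_add, ← sub_eq_add_neg]
  ring

lemma crossCoupling_pos {u v : ℝ} (hv : 0 < v) (hvu : v < u) : 0 < crossCoupling u v := by
  have hsub : 0 < u - v := sub_pos.2 hvu
  have hlt : 1 / (u + v) ^ 2 < 1 / (u - v) ^ 2 :=
    one_div_lt_one_div_of_lt (by positivity) (by gcongr; linarith)
  exact half_pos (sub_pos.2 hlt)

lemma selfCoupling_eq_div {u v : ℝ} (hsub : u - v ≠ 0) (hadd : u + v ≠ 0) :
    selfCoupling u v = (u ^ 2 + v ^ 2) / (u ^ 2 - v ^ 2) ^ 2 := by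
  rw [selfCoupling, sq_sub_sq]
  field_simp
  ring

section Axes

variable {x y z : ℝ}

lemma one_div_add_sq_lt (hz : 0 < z) (hzy : z < y) (hyx : y < x) :
    1 / (x + z) ^ 2 < 1 / (y + z) ^ 2 := by
  have hyz : 0 < y + z := by linarith
  gcongr

lemma selfCoupling_lt_middle_minor (hz : 0 < z) (hzy : z < y) (hyx : y < x) :
    selfCoupling x z < selfCoupling y z := by
  have hsub : 1 / (x - z) ^ 2 < 1 / (y - z) ^ 2 := by
    have hyz : 0 < y - z := sub_pos.2 hzy
    gcongr
  simp only [selfCoupling]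
  linarith [one_div_add_sq_lt hz hzy hyx]

lemma selfCoupling_lt_major_middle (hz : 0 < z) (hzy : z < y) (hyx : y < x) :
    selfCoupling x z < selfCoupling x y := by
  have hsq : 0 < x ^ 2 - y ^ 2 := by nlinarith
  rw [selfCoupling_eq_div (by linarith) (by linarith),
    selfCoupling_eq_div (by linarith) (by linarith)]
  gcongr

lemma selfCoupling_add_crossCoupling_sq_sub (hxy : x - y ≠ 0) (hxy' : x + y ≠ 0) (hxz : x - z ≠ 0)
    (hxz' : x + z ≠ 0) :
    (selfCoupling x y - selfCoupling x z + crossCoupling x z) ^ 2 - crossCoupling x y ^ 2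
      = -((y ^ 2 - z ^ 2) / ((x - y) ^ 2 * (x + y) ^ 2)
        * (((2 * x + z) ^ 2 - y ^ 2) / (x + z) ^ 4)) := by
  simp only [selfCoupling, crossCoupling]
  field_simp
  ring

lemma add_sq_le_add_mul_mul_add_mul_inv {D β r : ℝ} (hD : 0 ≤ D) (hβ : 0 ≤ β) (hr : 0 < r) :
    (D + β) ^ 2 ≤ (D + β * r) * (D + β * r⁻¹) := by
  have hgap : (D + β * r) * (D + β * r⁻¹) - (D + β) ^ 2 = D * β * (r - 1) ^ 2 * r⁻¹ := by
    field_simp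
    ring
  have : 0 ≤ D * β * (r - 1) ^ 2 * r⁻¹ := by positivity
  linarith

end Axes

/-- The energy, up to a factor `1 / 2`, of tilting the angular momenta `m`, `n` away from the middle
axis by the components `l`, `r` along the normal of the plane of the axes `i`, `j`, where the
contribution of the middle axis is bounded below by the inequality
`2 l₁ r₁ ≥ (n / m) l₁ ^ 2 + (m / n) r₁ ^ 2`. -/
noncomputable def tiltForm (b : Fin 3 → ℝ) (i j : Fin 3) (m n l r : ℝ) : ℝ :=
  (selfCoupling (b i) (b j) - selfCoupling (b 0) (b 2)
      - crossCoupling (b 0) (b 2) * (n / m)) * l ^ 2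
    + 2 * crossCoupling (b i) (b j) * l * r
    + (selfCoupling (b i) (b j) - selfCoupling (b 0) (b 2)
      - crossCoupling (b 0) (b 2) * (m / n)) * r ^ 2

/-- Positive definiteness of `tiltForm b i j m n`, in terms of its coefficients. -/
structure IsTiltStable (b : Fin 3 → ℝ) (i j : Fin 3) (m n : ℝ) : Prop where
  pos : 0 < selfCoupling (b i) (b j) - selfCoupling (b 0) (b 2)
    - crossCoupling (b 0) (b 2) * (n / m)
  sq_lt : crossCoupling (b i) (b j) ^ 2
    < (selfCoupling (b i) (b j) - selfCoupling (b 0) (b 2) - crossCoupling (b 0) (b 2) * (n / m))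
      * (selfCoupling (b i) (b j) - selfCoupling (b 0) (b 2)
        - crossCoupling (b 0) (b 2) * (m / n))

variable {b : Fin 3 → ℝ} {i j : Fin 3} {m n l r κ : ℝ}

lemma IsTiltStable.tiltForm_pos (h : IsTiltStable b i j m n) (hlr : l ≠ 0 ∨ r ≠ 0) :
    0 < tiltForm b i j m n l r :=
  binaryForm_pos h.pos h.sq_lt hlr

lemma IsTiltStable.tiltForm_nonneg (h : IsTiltStable b i j m n) (l r : ℝ) :
    0 ≤ tiltForm b i j m n l r := by
  by_cases hlr : l ≠ 0 ∨ r ≠ 0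
  · exact (h.tiltForm_pos hlr).le
  · push Not at hlr
    simp [tiltForm, hlr]

lemma IsTiltStable.eventually (h : IsTiltStable b i j m n) (hij : b i - b j ≠ 0)
    (hij' : b i + b j ≠ 0) (h₀₂ : b 0 - b 2 ≠ 0) (h₀₂' : b 0 + b 2 ≠ 0) :
    ∀ᶠ c in 𝓝 b, IsTiltStable c i j m n := by
  have hself {i j : Fin 3} (hsub : b i - b j ≠ 0) (hadd : b i + b j ≠ 0) :
      ContinuousAt (fun c : Fin 3 → ℝ ↦ selfCoupling (c i) (c j)) b := by
    unfold selfCoupling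
    fun_prop (disch := exact pow_ne_zero 2 (by assumption))
  have hcross {i j : Fin 3} (hsub : b i - b j ≠ 0) (hadd : b i + b j ≠ 0) :
      ContinuousAt (fun c : Fin 3 → ℝ ↦ crossCoupling (c i) (c j)) b := by
    unfold crossCoupling
    fun_prop (disch := exact pow_ne_zero 2 (by assumption))
  have hcoeff (a : ℝ) := ((hself hij hij').sub (hself h₀₂ h₀₂')).sub
    ((hcross h₀₂ h₀₂').mul_const a)
  filter_upwards [(hcoeff (n / m)).eventually_const_lt h.pos,
    ((hcross hij hij').pow 2).eventually_lt ((hcoeff (n / m)).mul (hcoeff (m / n))) h.sq_lt]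
    with c hpos hsq using ⟨hpos, hsq⟩

lemma isTiltStable_one_two (hb₂ : 0 < b 2) (hb₂₁ : b 2 < b 1) (hb₁₀ : b 1 < b 0) (hmn : m * n < 0) :
    IsTiltStable b 1 2 m n := by
  have hgap := sub_pos.2 (selfCoupling_lt_middle_minor hb₂ hb₂₁ hb₁₀)
  have hβ := crossCoupling_pos hb₂ (hb₂₁.trans hb₁₀)
  have hratio : 0 < -(n / m) := neg_pos.2 (div_neg_iff.2 (mul_neg_iff.1 (mul_comm m n ▸ hmn)))
  have hsum : crossCoupling (b 1) (b 2)
      < selfCoupling (b 1) (b 2) - selfCoupling (b 0) (b 2) + crossCoupling (b 0) (b 2) := by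
    simp only [selfCoupling, crossCoupling]
    linarith [one_div_add_sq_lt hb₂ hb₂₁ hb₁₀]
  refine ⟨by nlinarith, ?_⟩
  calc crossCoupling (b 1) (b 2) ^ 2
      < (selfCoupling (b 1) (b 2) - selfCoupling (b 0) (b 2) + crossCoupling (b 0) (b 2)) ^ 2 :=
        pow_lt_pow_left₀ hsum (crossCoupling_pos hb₂ hb₂₁).le two_ne_zero
    _ ≤ _ := add_sq_le_add_mul_mul_add_mul_inv hgap.le hβ.le hratio
    _ = _ := by rw [inv_neg, inv_div]; ring

lemma isTiltStable_zero_one (hb₂ : 0 < b 2) (hb₂₁ : b 2 < b 1) (hb₁₀ : b 1 < b 0) (hmn : m * n < 0)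
    (hlt : (m - n) ^ 2 * (((2 * b 0 + b 2) ^ 2 - b 1 ^ 2) / (b 0 + b 2) ^ 4)
      < (m + n) ^ 2 * (((2 * b 0 - b 2) ^ 2 - b 1 ^ 2) / (b 0 - b 2) ^ 4)) :
    IsTiltStable b 0 1 m n := by
  have hm : m ≠ 0 := left_ne_zero_of_mul hmn.ne
  have hn : n ≠ 0 := right_ne_zero_of_mul hmn.ne
  have hgap := sub_pos.2 (selfCoupling_lt_major_middle hb₂ hb₂₁ hb₁₀)
  have hβ := crossCoupling_pos hb₂ (hb₂₁.trans hb₁₀)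
  have hratio : 0 < -(n / m) := neg_pos.2 (div_neg_iff.2 (mul_neg_iff.1 (mul_comm m n ▸ hmn)))
  have hadd := selfCoupling_add_crossCoupling_sq_sub (x := b 0) (y := b 1) (z := b 2)
    (by linarith) (by linarith) (by linarith) (by linarith)
  have hsub := selfCoupling_add_crossCoupling_sq_sub (x := b 0) (y := b 1) (z := -b 2)
    (by linarith) (by linarith) (by linarith) (by linarith)
  rw [selfCoupling_neg, crossCoupling_neg] at hsub
  have hfactor : 0 < (b 1 ^ 2 - b 2 ^ 2) / ((b 0 - b 1) ^ 2 * (b 0 + b 1) ^ 2) := by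
    have : 0 < b 1 ^ 2 - b 2 ^ 2 := by nlinarith
    have : 0 < b 0 - b 1 := sub_pos.2 hb₁₀
    have : 0 < b 0 + b 1 := by linarith
    positivity
  refine ⟨by nlinarith, sub_pos.1 ?_⟩
  refine (div_pos (mul_pos hfactor (sub_pos.2 hlt)) (by linarith : 0 < -(4 * (m * n)))).trans_eq ?_
  have hsplit (D β' β : ℝ) : (D - β' * (n / m)) * (D - β' * (m / n)) - β ^ 2
      = ((m - n) ^ 2 * ((D + β') ^ 2 - β ^ 2) - (m + n) ^ 2 * ((D + -β') ^ 2 - β ^ 2))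
        / -(4 * (m * n)) := by
    field_simp
    ring
  rw [hsplit, hadd, hsub]
  ring

lemma IsBalanced.sub_sq_mul_lt (hbal : IsBalanced κ m n b) (hκ : 0 < κ) (hb₂ : 0 < b 2)
    (hb₂₁ : b 2 < b 1) (hb₁₀ : b 1 < b 0) :
    (m - n) ^ 2 * (((2 * b 0 + b 2) ^ 2 - b 1 ^ 2) / (b 0 + b 2) ^ 4)
      < (m + n) ^ 2 * (((2 * b 0 - b 2) ^ 2 - b 1 ^ 2) / (b 0 - b 2) ^ 4) := by
  have hb := forall_pos_of_lt_of_lt hb₂ hb₂₁ hb₁₀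
  have h₀ := hb 0
  have hK₁ := carlsonIntegral_three_halves_pos (k := 1) (by norm_num) (sq_apply_pos hb)
  have hK₂ := carlsonIntegral_three_halves_pos (k := 2) (by norm_num) (sq_apply_pos hb)
  have hadd : b 0 + b 2 ≠ 0 := by linarith
  have hsub : b 0 - b 2 ≠ 0 := by linarith
  have hsq₂₁ : 0 < b 1 ^ 2 - b 2 ^ 2 := sub_pos.2 (pow_lt_pow_left₀ hb₂₁ hb₂.le two_ne_zero)
  have hsq₁₀ : 0 < b 0 ^ 2 - b 1 ^ 2 := sub_pos.2 (pow_lt_pow_left₀ hb₁₀ (hb 1).le two_ne_zero)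
  have hcoeff₁ : 0 < 4 * b 0 ^ 4 + b 0 ^ 2 * b 2 ^ 2 - b 0 ^ 2 * b 1 ^ 2 - b 1 ^ 2 * b 2 ^ 2 := by
    nlinarith [mul_pos (sq_pos_of_pos h₀) hsq₁₀, mul_pos (sq_pos_of_pos hb₂) hsq₁₀,
      pow_pos h₀ 4]
  have hcoeff₂ : 0 < 4 * b 0 ^ 2 - b 1 ^ 2 := by linarith [sq_pos_of_pos h₀]
  have hpos : 0 < 2 * κ * (b 1 ^ 2 - b 2 ^ 2) / (b 0 * b 2)
      * ((4 * b 0 ^ 4 + b 0 ^ 2 * b 2 ^ 2 - b 0 ^ 2 * b 1 ^ 2 - b 1 ^ 2 * b 2 ^ 2)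
          * carlsonIntegral 1 (fun _ ↦ 3 / 2) (b ^ 2)
        + (4 * b 0 ^ 2 - b 1 ^ 2) * carlsonIntegral 2 (fun _ ↦ 3 / 2) (b ^ 2)) := by
    positivity
  refine sub_pos.1 (hpos.trans_eq ?_)
  rw [hbal.add_sq, hbal.sub_sq, indexSymbol_zero_sub_one (sq_apply_pos hb),
    indexSymbol_one_sub_two (sq_apply_pos hb)]
  simp only [Pi.pow_apply]
  field_simp
  ring

/-- The energy of rotation of an ellipsoid with semiaxes `b` and angular momenta `l`, `r`. -/
noncomputable def spinEnergy (b l r : Fin 3 → ℝ) : ℝ :=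
  rotEnergy (b 1) (b 2) (l 0) (r 0) + rotEnergy (b 0) (b 2) (l 1) (r 1)
    + rotEnergy (b 0) (b 1) (l 2) (r 2)

lemma rotEnergy_add_tiltForm_le_spinEnergy {l r : Fin 3 → ℝ} (hb₂ : 0 < b 2) (hb₂₀ : b 2 < b 0)
    (hmn : m * n < 0) (hl : ∑ i, l i ^ 2 = m ^ 2) (hr : ∑ i, r i ^ 2 = n ^ 2) :
    rotEnergy (b 0) (b 2) m n
      + (tiltForm b 1 2 m n (l 0) (r 0) + tiltForm b 0 1 m n (l 2) (r 2)) / 2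
      ≤ spinEnergy b l r := by
  have hm : m ≠ 0 := left_ne_zero_of_mul hmn.ne
  have hn : n ≠ 0 := right_ne_zero_of_mul hmn.ne
  have hratio : 0 ≤ -(n / m) := (neg_pos.2 (div_neg_iff.2 (mul_neg_iff.1 (mul_comm m n ▸ hmn)))).le
  have hcross : 0 ≤ crossCoupling (b 0) (b 2)
      * (2 * l 1 * r 1 - n / m * l 1 ^ 2 - m / n * r 1 ^ 2) := by
    refine mul_nonneg (crossCoupling_pos hb₂ hb₂₀).le ?_
    refine (mul_nonneg hratio (sq_nonneg (l 1 - m / n * r 1))).trans_eq ?_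
    field_simp
    ring
  have hl₁ : l 1 ^ 2 = m ^ 2 - l 0 ^ 2 - l 2 ^ 2 := by
    rw [← hl, Fin.sum_univ_three]
    ring
  have hr₁ : r 1 ^ 2 = n ^ 2 - r 0 ^ 2 - r 2 ^ 2 := by
    rw [← hr, Fin.sum_univ_three]
    ring
  have hmid : n / m * m ^ 2 + m / n * n ^ 2 = 2 * m * n := by
    field_simp
    ring
  simp only [spinEnergy, tiltForm, rotEnergy_eq_coupling]
  rw [hl₁, hr₁] at hcross ⊢
  linear_combination hcross / 2 - crossCoupling (b 0) (b 2) / 2 * hmid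

end TransverseStability

section Hamiltonian

open Filter Topology

/-- The semiaxes `b₁`, `b₂`, `b₃` of an ellipsoid whose volume is normalized by `b₁ b₂ b₃ = 1`. -/
noncomputable def unitVolumeAxes (b₁ b₂ : ℝ) : Fin 3 → ℝ := ![b₁, b₂, (b₁ * b₂)⁻¹]

/-- The left angular momentum `η_l` of a state of the reduced system. -/
def leftMomentum (p : Fin 10 → ℝ) : Fin 3 → ℝ := ![p 4, p 5, p 6]

/-- The right angular momentum `η_r` of a state of the reduced system. -/
def rightMomentum (p : Fin 10 → ℝ) : Fin 3 → ℝ := ![p 7, p 8, p 9]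

/-- The energy of the deformation of an ellipsoid with semiaxes `b`, where `c₁`, `c₂` are the
momenta conjugate to `b₁`, `b₂`. -/
noncomputable def deformationEnergy (b : Fin 3 → ℝ) (c₁ c₂ : ℝ) : ℝ :=
  ((b 1 ^ 2 + b 2 ^ 2) * b 0 ^ 2 * c₁ ^ 2 + (b 0 ^ 2 + b 2 ^ 2) * b 1 ^ 2 * c₂ ^ 2
      - 2 * b 2 * c₁ * c₂)
    / (2 * (b 0 ^ 2 * b 1 ^ 2 + b 0 ^ 2 * b 2 ^ 2 + b 1 ^ 2 * b 2 ^ 2))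

lemma deformationEnergy_zero (b : Fin 3 → ℝ) : deformationEnergy b 0 0 = 0 := by
  simp [deformationEnergy]

section Axes

variable {b₁ b₂ : ℝ}

lemma memB.minor_pos (hB : memB b₁ b₂) : 0 < unitVolumeAxes b₁ b₂ 2 := by
  have h₁ : 0 < b₁ := Real.sqrt_pos.1 (inv_pos.1 hB.2.2)
  have h₂ : 0 < b₂ := hB.2.2.trans hB.2.1
  exact inv_pos.2 (mul_pos h₁ h₂)

lemma memB.minor_lt_middle (hB : memB b₁ b₂) :
    unitVolumeAxes b₁ b₂ 2 < unitVolumeAxes b₁ b₂ 1 := by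
  have hsqrt : 0 < √b₁ := inv_pos.1 hB.2.2
  have h₁ : 0 < b₁ := Real.sqrt_pos.1 hsqrt
  have h₂ : 0 < b₂ := hB.2.2.trans hB.2.1
  have hone : 1 < b₂ * √b₁ := (inv_lt_iff_one_lt_mul₀ hsqrt).1 hB.2.1
  refine (inv_lt_iff_one_lt_mul₀ (mul_pos h₁ h₂)).2 ?_
  calc 1 < (b₂ * √b₁) ^ 2 := one_lt_pow₀ hone two_ne_zero
    _ = b₂ * (b₁ * b₂) := by rw [mul_pow, Real.sq_sqrt h₁.le]; ring

lemma memB.middle_lt_major (hB : memB b₁ b₂) :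
    unitVolumeAxes b₁ b₂ 1 < unitVolumeAxes b₁ b₂ 0 :=
  hB.1

lemma memB.unitVolumeAxes_pos (hB : memB b₁ b₂) (i : Fin 3) : 0 < unitVolumeAxes b₁ b₂ i :=
  forall_pos_of_lt_of_lt hB.minor_pos hB.minor_lt_middle hB.middle_lt_major i

lemma memB.prod_unitVolumeAxes (hB : memB b₁ b₂) : ∏ i, unitVolumeAxes b₁ b₂ i = 1 := by
  have h₀ : b₁ ≠ 0 := (hB.unitVolumeAxes_pos 0).ne'
  have h₁ : b₂ ≠ 0 := (hB.unitVolumeAxes_pos 1).ne'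
  rw [Fin.prod_univ_three]
  exact mul_inv_cancel₀ (mul_ne_zero h₀ h₁)

lemma memB.eventually {X : Type*} [TopologicalSpace X] {f₁ f₂ : X → ℝ} {x : X}
    (hB : memB (f₁ x) (f₂ x)) (hf₁ : ContinuousAt f₁ x) (hf₂ : ContinuousAt f₂ x) :
    ∀ᶠ y in 𝓝 x, memB (f₁ y) (f₂ y) := by
  have hinv := hf₁.sqrt.inv₀ (inv_pos.1 hB.2.2).ne'
  filter_upwards [hf₂.eventually_lt hf₁ hB.1, hinv.eventually_lt hf₂ hB.2.1,
    hinv.eventually_const_lt hB.2.2] with y h₁ h₂ h₃ using ⟨h₁, h₂, h₃⟩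

lemma deformationEnergy_pos {b : Fin 3 → ℝ} {c₁ c₂ : ℝ} (hb : ∀ i, 0 < b i)
    (hprod : ∏ i, b i = 1) (hc : c₁ ≠ 0 ∨ c₂ ≠ 0) : 0 < deformationEnergy b c₁ c₂ := by
  have h₀ := hb 0
  have h₁ := hb 1
  have h₂ := hb 2
  rw [Fin.prod_univ_three] at hprod
  have hdet : (-b 2) ^ 2
      < (b 1 ^ 2 + b 2 ^ 2) * b 0 ^ 2 * ((b 0 ^ 2 + b 2 ^ 2) * b 1 ^ 2) := by
    have hexpand : (b 1 ^ 2 + b 2 ^ 2) * b 0 ^ 2 * ((b 0 ^ 2 + b 2 ^ 2) * b 1 ^ 2)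
        = b 0 ^ 2 * b 1 ^ 2 * (b 0 ^ 2 * b 1 ^ 2 + b 1 ^ 2 * b 2 ^ 2)
          + (b 0 * b 1 * b 2) ^ 2 * (b 0 ^ 2 + b 2 ^ 2) := by ring
    have : 0 < b 0 ^ 2 * b 1 ^ 2 * (b 0 ^ 2 * b 1 ^ 2 + b 1 ^ 2 * b 2 ^ 2) + b 0 ^ 2 := by
      positivity
    rw [hexpand, hprod]
    linarith
  refine div_pos ((binaryForm_pos (by positivity) hdet hc).trans_eq ?_) (by positivity)
  ring

lemma deformationEnergy_nonneg {b : Fin 3 → ℝ} (hb : ∀ i, 0 < b i) (hprod : ∏ i, b i = 1)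
    (c₁ c₂ : ℝ) : 0 ≤ deformationEnergy b c₁ c₂ := by
  by_cases hc : c₁ ≠ 0 ∨ c₂ ≠ 0
  · exact (deformationEnergy_pos hb hprod hc).le
  · push Not at hc
    rw [hc.1, hc.2, deformationEnergy_zero]

end Axes

variable {g : ℝ} {p : Fin 10 → ℝ}

lemma rotEnergy_eq_div {u v : ℝ} (hsub : u - v ≠ 0) (hadd : u + v ≠ 0) (m n : ℝ) :
    rotEnergy u v m n
      = ((u ^ 2 + v ^ 2) * (m ^ 2 + n ^ 2) + 4 * u * v * m * n) / (2 * (u ^ 2 - v ^ 2) ^ 2) := by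
  rw [rotEnergy, sq_sub_sq]
  field_simp
  ring

lemma Hred_eq (hB : memB (p 0) (p 1)) :
    Hred g p = deformationEnergy (unitVolumeAxes (p 0) (p 1)) (p 2) (p 3)
      + spinEnergy (unitVolumeAxes (p 0) (p 1)) (leftMomentum p) (rightMomentum p)
      - 2 * π * g * gravityIntegral (unitVolumeAxes (p 0) (p 1) ^ 2) := by
  have hpos := hB.unitVolumeAxes_pos
  have h₂₁ := hB.minor_lt_middle
  have h₁₀ := hB.middle_lt_major
  have hgravity : gravityIntegral (unitVolumeAxes (p 0) (p 1) ^ 2) = ∫ s in Set.Ioi (0 : ℝ),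
      ((s + p 0 ^ 2) * (s + p 1 ^ 2) * (s + (p 0 * p 1)⁻¹ ^ 2)) ^ (-(1 : ℝ) / 2) := by
    have hvec : unitVolumeAxes (p 0) (p 1) ^ 2 = ![p 0 ^ 2, p 1 ^ 2, (p 0 * p 1)⁻¹ ^ 2] := by
      ext i
      fin_cases i <;> rfl
    rw [gravityIntegral, hvec, carlsonIntegral_const_vec_three _ _ (sq_nonneg _) (sq_nonneg _)
      (sq_nonneg _)]
    simp only [pow_zero, one_mul, neg_div]
  rw [hgravity, spinEnergy,
    rotEnergy_eq_div (sub_pos.2 h₂₁).ne' (add_pos (hpos 1) (hpos 2)).ne',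
    rotEnergy_eq_div (sub_pos.2 (h₂₁.trans h₁₀)).ne' (add_pos (hpos 0) (hpos 2)).ne',
    rotEnergy_eq_div (sub_pos.2 h₁₀).ne' (add_pos (hpos 0) (hpos 1)).ne']
  simp only [Hred, deformationEnergy, unitVolumeAxes, leftMomentum, rightMomentum,
    Matrix.cons_val_zero, Matrix.cons_val_one, Matrix.cons_val]
  ring

lemma differentiableAt_rotEnergy {E : Type*} [NormedAddCommGroup E] [NormedSpace ℝ E]
    {u v m n : E → ℝ} {x : E} (hu : DifferentiableAt ℝ u x) (hv : DifferentiableAt ℝ v x)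
    (hm : DifferentiableAt ℝ m x) (hn : DifferentiableAt ℝ n x) (hsub : u x - v x ≠ 0)
    (hadd : u x + v x ≠ 0) :
    DifferentiableAt ℝ (fun y ↦ rotEnergy (u y) (v y) (m y) (n y)) x := by
  unfold rotEnergy
  fun_prop (disch := exact pow_ne_zero 2 (by assumption))

lemma memB.differentiableAt_Hred (hB : memB (p 0) (p 1)) : DifferentiableAt ℝ (Hred g) p := by
  have hpos := hB.unitVolumeAxes_pos
  have h₂₁ := hB.minor_lt_middle
  have h₁₀ := hB.middle_lt_major
  have hcoord (i : Fin 10) : DifferentiableAt ℝ (fun q : Fin 10 → ℝ ↦ q i) p :=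
    differentiableAt_apply i p
  have hinv : DifferentiableAt ℝ (fun q : Fin 10 → ℝ ↦ (q 0 * q 1)⁻¹) p :=
    ((hcoord 0).mul (hcoord 1)).inv (mul_pos (hpos 0) (hpos 1)).ne'
  have haxes : DifferentiableAt ℝ (fun q : Fin 10 → ℝ ↦ unitVolumeAxes (q 0) (q 1)) p :=
    differentiableAt_pi.2 fun i ↦ by
      fin_cases i
      exacts [hcoord 0, hcoord 1, hinv]
  have haxis (i : Fin 3) :
      DifferentiableAt ℝ (fun q : Fin 10 → ℝ ↦ unitVolumeAxes (q 0) (q 1) i) p :=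
    differentiableAt_pi.1 haxes i
  have hformula : Hred g =ᶠ[𝓝 p] fun q ↦
      deformationEnergy (unitVolumeAxes (q 0) (q 1)) (q 2) (q 3)
      + spinEnergy (unitVolumeAxes (q 0) (q 1)) (leftMomentum q) (rightMomentum q)
      - 2 * π * g * gravityIntegral (unitVolumeAxes (q 0) (q 1) ^ 2) := by
    filter_upwards [hB.eventually (continuousAt_apply 0 p) (continuousAt_apply 1 p)] with q hq
      using Hred_eq hq
  refine DifferentiableAt.congr_of_eventuallyEq (((?_ : DifferentiableAt ℝ _ p).add ?_).sub
    (DifferentiableAt.const_mul ?_ _)) hformula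
  · have hden : 2 * (unitVolumeAxes (p 0) (p 1) 0 ^ 2 * unitVolumeAxes (p 0) (p 1) 1 ^ 2
        + unitVolumeAxes (p 0) (p 1) 0 ^ 2 * unitVolumeAxes (p 0) (p 1) 2 ^ 2
        + unitVolumeAxes (p 0) (p 1) 1 ^ 2 * unitVolumeAxes (p 0) (p 1) 2 ^ 2) ≠ 0 := by
      have h₀ := hpos 0
      have h₁ := hpos 1
      have h₂ := hpos 2
      positivity
    unfold deformationEnergy
    fun_prop (disch := assumption)
  · have hplane {i j : Fin 3} {k l : Fin 10}
        (hij : unitVolumeAxes (p 0) (p 1) j < unitVolumeAxes (p 0) (p 1) i) :=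
      differentiableAt_rotEnergy (haxis i) (haxis j) (hcoord k) (hcoord l)
        (sub_pos.2 hij).ne' (add_pos (hpos i) (hpos j)).ne'
    exact ((hplane h₂₁).add (hplane (h₂₁.trans h₁₀))).add (hplane h₁₀)
  · have hgravity : DifferentiableAt ℝ gravityIntegral (unitVolumeAxes (p 0) (p 1) ^ 2) :=
      (contDiffAt_gravityIntegral 1 (by simp) (sq_apply_pos hpos)).differentiableAt one_ne_zero
    exact DifferentiableAt.comp p hgravity (haxes.pow 2)

end Hamiltonian

section SteadyState

open Filter Topology

/-- The state in which an ellipsoid with semiaxes `b₁ > b₂ > (b₁ b₂)⁻¹` rotates steadily about its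
middle axis with angular momenta `m`, `n`. -/
def middleAxisState (b₁ b₂ m n : ℝ) : Fin 10 → ℝ := ![b₁, b₂, 0, 0, 0, m, 0, 0, n, 0]

/-- The states whose angular momenta have squared lengths `m ^ 2` and `n ^ 2`. -/
def momentumLevel (m n : ℝ) : Set (Fin 10 → ℝ) :=
  {p | ∑ i, leftMomentum p i ^ 2 = m ^ 2 ∧ ∑ i, rightMomentum p i ^ 2 = n ^ 2}

variable {g m n b₁ b₂ : ℝ} {p : Fin 10 → ℝ}

lemma rotEnergy_nonneg (u v m n : ℝ) : 0 ≤ rotEnergy u v m n := by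
  unfold rotEnergy
  positivity

lemma sum_leftMomentum_sq (p : Fin 10 → ℝ) :
    ∑ i, leftMomentum p i ^ 2 = p 4 ^ 2 + p 5 ^ 2 + p 6 ^ 2 :=
  Fin.sum_univ_three _

lemma sum_rightMomentum_sq (p : Fin 10 → ℝ) :
    ∑ i, rightMomentum p i ^ 2 = p 7 ^ 2 + p 8 ^ 2 + p 9 ^ 2 :=
  Fin.sum_univ_three _

lemma isClosed_momentumLevel (m n : ℝ) : IsClosed (momentumLevel m n) := by
  simp only [momentumLevel, sum_leftMomentum_sq, sum_rightMomentum_sq]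
  exact (isClosed_eq (by fun_prop) continuous_const).inter
    (isClosed_eq (by fun_prop) continuous_const)

lemma Hred_middleAxisState (hB : memB b₁ b₂) :
    Hred g (middleAxisState b₁ b₂ m n)
      = effectivePotential (2 * π * g) m n (unitVolumeAxes b₁ b₂) := by
  have hp : memB (middleAxisState b₁ b₂ m n 0) (middleAxisState b₁ b₂ m n 1) := hB
  rw [Hred_eq hp]
  simp [middleAxisState, leftMomentum, rightMomentum, spinEnergy, effectivePotential,
    deformationEnergy_zero, rotEnergy]

lemma effectivePotential_add_tiltForm_le_Hred (hB : memB (p 0) (p 1)) (hmn : m * n < 0)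
    (hp : p ∈ momentumLevel m n) :
    deformationEnergy (unitVolumeAxes (p 0) (p 1)) (p 2) (p 3)
      + effectivePotential (2 * π * g) m n (unitVolumeAxes (p 0) (p 1))
      + (tiltForm (unitVolumeAxes (p 0) (p 1)) 1 2 m n (p 4) (p 7)
        + tiltForm (unitVolumeAxes (p 0) (p 1)) 0 1 m n (p 6) (p 9)) / 2
      ≤ Hred g p := by
  have hspin := rotEnergy_add_tiltForm_le_spinEnergy hB.minor_pos
    (hB.minor_lt_middle.trans hB.middle_lt_major) hmn hp.1 hp.2
  simp only [leftMomentum, rightMomentum, Matrix.cons_val_zero, Matrix.cons_val] at hspin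
  rw [Hred_eq hB, effectivePotential]
  simp only [leftMomentum, rightMomentum]
  linarith

lemma eq_of_sq_eq_sq_of_mul_pos {x y : ℝ} (h : x ^ 2 = y ^ 2) (hxy : 0 < x * y) : x = y :=
  (sq_eq_sq_iff_eq_or_eq_neg.1 h).resolve_right fun hneg ↦
    (neg_nonpos.2 (mul_self_nonneg y)).not_gt (by rwa [hneg, neg_mul] at hxy)

lemma eq_middleAxisState (hp : p ∈ momentumLevel m n) (h₀ : p 0 = b₁) (h₁ : p 1 = b₂)
    (h₂₃ : p 2 = 0 ∧ p 3 = 0) (h₄₇ : p 4 = 0 ∧ p 7 = 0) (h₆₉ : p 6 = 0 ∧ p 9 = 0)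
    (hm : 0 < p 5 * m) (hn : 0 < p 8 * n) : p = middleAxisState b₁ b₂ m n := by
  have h₅ : p 5 = m := eq_of_sq_eq_sq_of_mul_pos
    (by simpa [sum_leftMomentum_sq, h₄₇.1, h₆₉.1] using hp.1) hm
  have h₈ : p 8 = n := eq_of_sq_eq_sq_of_mul_pos
    (by simpa [sum_rightMomentum_sq, h₄₇.2, h₆₉.2] using hp.2) hn
  ext i
  fin_cases i
  exacts [h₀, h₁, h₂₃.1, h₂₃.2, h₄₇.1, h₅, h₆₉.1, h₄₇.2, h₈, h₆₉.2]

lemma Hred_middleAxisState_lt (hB : memB b₁ b₂) (hpB : memB (p 0) (p 1)) (hmn : m * n < 0)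
    (hp : p ∈ momentumLevel m n)
    (hpot : unitVolumeAxes (p 0) (p 1) ≠ unitVolumeAxes b₁ b₂ →
      effectivePotential (2 * π * g) m n (unitVolumeAxes b₁ b₂)
        < effectivePotential (2 * π * g) m n (unitVolumeAxes (p 0) (p 1)))
    (h₁₂ : IsTiltStable (unitVolumeAxes (p 0) (p 1)) 1 2 m n)
    (h₀₁ : IsTiltStable (unitVolumeAxes (p 0) (p 1)) 0 1 m n)
    (hm : 0 < p 5 * m) (hn : 0 < p 8 * n) (hne : p ≠ middleAxisState b₁ b₂ m n) :
    Hred g (middleAxisState b₁ b₂ m n) < Hred g p := by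
  have hlower := effectivePotential_add_tiltForm_le_Hred (g := g) hpB hmn hp
  have hpot' : effectivePotential (2 * π * g) m n (unitVolumeAxes b₁ b₂)
      ≤ effectivePotential (2 * π * g) m n (unitVolumeAxes (p 0) (p 1)) := by
    by_cases h : unitVolumeAxes (p 0) (p 1) = unitVolumeAxes b₁ b₂
    · rw [h]
    · exact (hpot h).le
  have hdef := deformationEnergy_nonneg hpB.unitVolumeAxes_pos hpB.prod_unitVolumeAxes (p 2) (p 3)
  have htilt₁₂ := h₁₂.tiltForm_nonneg (p 4) (p 7)
  have htilt₀₁ := h₀₁.tiltForm_nonneg (p 6) (p 9)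
  rw [Hred_middleAxisState hB]
  by_contra! hle
  have haxes : unitVolumeAxes (p 0) (p 1) = unitVolumeAxes b₁ b₂ := by
    by_contra h
    linarith [hpot h]
  refine hne (eq_middleAxisState hp (congrFun haxes 0) (congrFun haxes 1) ?_ ?_ ?_ hm hn) <;>
    by_contra h <;> rw [not_and_or] at h
  · linarith [deformationEnergy_pos hpB.unitVolumeAxes_pos hpB.prod_unitVolumeAxes h]
  · linarith [h₁₂.tiltForm_pos h]
  · linarith [h₀₁.tiltForm_pos h]

lemma IsBalanced.eventually_Hred_lt (hbal : IsBalanced (2 * π * g) m n (unitVolumeAxes b₁ b₂))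
    (hg : 0 < g) (hB : memB b₁ b₂) (hmn : m * n < 0)
    (h9 : unitVolumeAxes b₁ b₂ 1 ^ 2 ≤ 9 * unitVolumeAxes b₁ b₂ 2 ^ 2) :
    ∀ᶠ p in 𝓝[≠] middleAxisState b₁ b₂ m n, p ∈ momentumLevel m n →
      Hred g (middleAxisState b₁ b₂ m n) < Hred g p := by
  have hκ : 0 < 2 * π * g := by positivity
  have hpos := hB.unitVolumeAxes_pos
  have h₂₁ := hB.minor_lt_middle
  have h₁₀ := hB.middle_lt_major
  have hcoord (i : Fin 10) : ContinuousAt (fun p : Fin 10 → ℝ ↦ p i)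
      (middleAxisState b₁ b₂ m n) := continuousAt_apply i _
  have haxes : Tendsto (fun p : Fin 10 → ℝ ↦ unitVolumeAxes (p 0) (p 1))
      (𝓝 (middleAxisState b₁ b₂ m n)) (𝓝 (unitVolumeAxes b₁ b₂)) :=
    tendsto_pi_nhds.2 fun i ↦ by
      fin_cases i
      exacts [hcoord 0, hcoord 1,
        ((hcoord 0).mul (hcoord 1)).inv₀ (mul_pos (hpos 0) (hpos 1)).ne']
  have hsub {i j : Fin 3} (hij : unitVolumeAxes b₁ b₂ j < unitVolumeAxes b₁ b₂ i) :=
    (sub_pos.2 hij).ne'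
  have hadd (i j : Fin 3) := (add_pos (hpos i) (hpos j)).ne'
  have hmin := hbal.eventually_effectivePotential_lt hκ (hpos 2) h₂₁ h₁₀ h9
  have h₁₂ := (isTiltStable_one_two (hpos 2) h₂₁ h₁₀ hmn).eventually (hsub h₂₁) (hadd _ _)
    (hsub (h₂₁.trans h₁₀)) (hadd _ _)
  have h₀₁ := (isTiltStable_zero_one (hpos 2) h₂₁ h₁₀ hmn
    (hbal.sub_sq_mul_lt hκ (hpos 2) h₂₁ h₁₀)).eventually (hsub h₁₀) (hadd _ _)
    (hsub (h₂₁.trans h₁₀)) (hadd _ _)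
  have hm : ∀ᶠ p in 𝓝 (middleAxisState b₁ b₂ m n), 0 < p 5 * m :=
    ((hcoord 5).mul_const m).eventually_const_lt (mul_self_pos.2 (left_ne_zero_of_mul hmn.ne))
  have hn : ∀ᶠ p in 𝓝 (middleAxisState b₁ b₂ m n), 0 < p 8 * n :=
    ((hcoord 8).mul_const n).eventually_const_lt (mul_self_pos.2 (right_ne_zero_of_mul hmn.ne))
  refine eventually_nhdsWithin_iff.2 ?_
  filter_upwards [memB.eventually hB (hcoord 0) (hcoord 1), haxes.eventually hmin,
    haxes.eventually h₁₂, haxes.eventually h₀₁, hm, hn] with p hpB hpot h₁₂ h₀₁ hm hn hne hp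
  refine Hred_middleAxisState_lt hB hpB hmn hp (hpot ?_) h₁₂ h₀₁ hm hn hne
  rw [hB.prod_unitVolumeAxes, hpB.prod_unitVolumeAxes]

end SteadyState

section Dynamics

open Filter Topology

variable {g m n b₁ b₂ T : ℝ} {p : Fin 10 → ℝ} {γ : ℝ → Fin 10 → ℝ}

lemma fderiv_Hred_apply (g : ℝ) (p v : Fin 10 → ℝ) :
    fderiv ℝ (Hred g) p v = ∑ i, v i * pd g i p := by
  conv_lhs => rw [pi_eq_sum_univ' v, map_sum]
  simp [pd]

lemma fderiv_Hred_RVF (g : ℝ) (p : Fin 10 → ℝ) : fderiv ℝ (Hred g) p (RVF g p) = 0 := by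
  rw [fderiv_Hred_apply]
  simp only [Fin.sum_univ_succ, RVF]
  simp
  ring

namespace IsSolution

variable {s : Set ℝ} {t : ℝ}

lemma hasDerivAt (hγ : IsSolution g γ s) (ht : t ∈ s) : HasDerivAt γ (RVF g (γ t)) t :=
  hasDerivAt_pi.2 (hγ t ht).2

lemma hasDerivAt_Hred (hγ : IsSolution g γ s) (ht : t ∈ s) :
    HasDerivAt (fun t ↦ Hred g (γ t)) 0 t := by
  rw [← fderiv_Hred_RVF g (γ t)]
  exact (hγ t ht).1.differentiableAt_Hred.hasFDerivAt.comp_hasDerivAt t (hγ.hasDerivAt ht)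

lemma hasDerivAt_sum_leftMomentum_sq (hγ : IsSolution g γ s) (ht : t ∈ s) :
    HasDerivAt (fun t ↦ ∑ i, leftMomentum (γ t) i ^ 2) 0 t := by
  have hcoord := (hγ t ht).2
  simp only [sum_leftMomentum_sq]
  refine ((((hcoord 4).pow 2).add ((hcoord 5).pow 2)).add ((hcoord 6).pow 2)).congr_deriv ?_
  simp [RVF]
  ring

lemma hasDerivAt_sum_rightMomentum_sq (hγ : IsSolution g γ s) (ht : t ∈ s) :
    HasDerivAt (fun t ↦ ∑ i, rightMomentum (γ t) i ^ 2) 0 t := by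
  have hcoord := (hγ t ht).2
  simp only [sum_rightMomentum_sq]
  refine ((((hcoord 7).pow 2).add ((hcoord 8).pow 2)).add ((hcoord 9).pow 2)).congr_deriv ?_
  simp [RVF]
  ring

lemma mem_momentumLevel (hγ : IsSolution g γ (Set.Ico 0 T)) (h0 : γ 0 ∈ momentumLevel m n)
    (ht : t ∈ Set.Ico 0 T) : γ t ∈ momentumLevel m n := by
  have hl := eq_of_hasDerivAt_zero_Ico (fun s hs ↦ hγ.hasDerivAt_sum_leftMomentum_sq hs) ht
  have hr := eq_of_hasDerivAt_zero_Ico (fun s hs ↦ hγ.hasDerivAt_sum_rightMomentum_sq hs) ht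
  exact ⟨hl.trans h0.1, hr.trans h0.2⟩

end IsSolution

lemma pd_eq_zero_of_eventually_le (hB : memB (p 0) (p 1)) (i : Fin 10)
    (h : ∀ᶠ t : ℝ in 𝓝 0, Hred g p ≤ Hred g (p + t • Pi.single i 1)) : pd g i p = 0 := by
  have hderiv : HasDerivAt (fun t : ℝ ↦ Hred g (p + t • Pi.single i 1)) (pd g i p) 0 :=
    hasDerivAt_comp_line (by simpa using hB.differentiableAt_Hred.hasFDerivAt)
  refine IsLocalMin.hasDerivAt_eq_zero ?_ hderiv
  simpa [IsLocalMin, IsMinFilter] using h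

lemma Hred_middleAxisState_le (hB : memB (p 0) (p 1)) :
    Hred g (middleAxisState (p 0) (p 1) (p 5) (p 8)) ≤ Hred g p := by
  have hdef := deformationEnergy_nonneg hB.unitVolumeAxes_pos hB.prod_unitVolumeAxes (p 2) (p 3)
  have h₁₂ := rotEnergy_nonneg (p 1) (unitVolumeAxes (p 0) (p 1) 2) (p 4) (p 7)
  have h₀₁ := rotEnergy_nonneg (p 0) (p 1) (p 6) (p 9)
  rw [Hred_middleAxisState hB, Hred_eq hB, effectivePotential, spinEnergy]
  simp only [leftMomentum, rightMomentum, unitVolumeAxes, Matrix.cons_val_zero,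
    Matrix.cons_val_one, Matrix.cons_val] at *
  linarith

lemma pd_middleAxisState_eq_zero (hB : memB b₁ b₂) {i : Fin 10} (hi : i ∉ ({0, 1, 5, 8} : Set _)) :
    pd g i (middleAxisState b₁ b₂ m n) = 0 := by
  refine pd_eq_zero_of_eventually_le hB i (.of_forall fun t ↦ ?_)
  have hfix {j : Fin 10} (hj : j ∈ ({0, 1, 5, 8} : Set _)) :
      (middleAxisState b₁ b₂ m n + t • Pi.single i (1 : ℝ) : Fin 10 → ℝ) j
        = middleAxisState b₁ b₂ m n j := by
    have hji : j ≠ i := fun h ↦ hi (h ▸ hj)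
    simp [hji]
  have hle := Hred_middleAxisState_le (g := g) (p := middleAxisState b₁ b₂ m n + t • Pi.single i 1)
    (by rw [hfix (by simp), hfix (by simp)]; exact hB)
  rwa [hfix (by simp), hfix (by simp), hfix (by simp), hfix (by simp)] at hle

lemma IsBalanced.pd_middleAxisState_eq_zero
    (hbal : IsBalanced (2 * π * g) m n (unitVolumeAxes b₁ b₂)) (hg : 0 < g) (hB : memB b₁ b₂)
    (hmn : m * n < 0) (h9 : unitVolumeAxes b₁ b₂ 1 ^ 2 ≤ 9 * unitVolumeAxes b₁ b₂ 2 ^ 2)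
    {i : Fin 10} (hi : i < 4) : pd g i (middleAxisState b₁ b₂ m n) = 0 := by
  refine pd_eq_zero_of_eventually_le hB i ?_
  have hline : Tendsto (fun t : ℝ ↦ middleAxisState b₁ b₂ m n + t • Pi.single i 1) (𝓝 0)
      (𝓝 (middleAxisState b₁ b₂ m n)) :=
    Continuous.tendsto' (by fun_prop) _ _ (by simp)
  have hfix (t : ℝ) {j : Fin 10} (hj : 4 ≤ j) :
      (middleAxisState b₁ b₂ m n + t • Pi.single i (1 : ℝ) : Fin 10 → ℝ) j
        = middleAxisState b₁ b₂ m n j := by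
    simp [(hi.trans_le hj).ne']
  have hmin := eventually_nhdsWithin_iff.1 (hbal.eventually_Hred_lt hg hB hmn h9)
  filter_upwards [hline.eventually hmin] with t ht
  by_cases hne : middleAxisState b₁ b₂ m n + t • Pi.single i 1 = middleAxisState b₁ b₂ m n
  · rw [hne]
  · refine (ht hne ⟨?_, ?_⟩).le
    · rw [sum_leftMomentum_sq, hfix t (by decide), hfix t (by decide), hfix t (by decide)]
      simp [middleAxisState]
    · rw [sum_rightMomentum_sq, hfix t (by decide), hfix t (by decide), hfix t (by decide)]
      simp [middleAxisState]

lemma IsBalanced.RVF_middleAxisState_eq_zero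
    (hbal : IsBalanced (2 * π * g) m n (unitVolumeAxes b₁ b₂)) (hg : 0 < g) (hB : memB b₁ b₂)
    (hmn : m * n < 0) (h9 : unitVolumeAxes b₁ b₂ 1 ^ 2 ≤ 9 * unitVolumeAxes b₁ b₂ 2 ^ 2) :
    RVF g (middleAxisState b₁ b₂ m n) = 0 := by
  have hpd {i : Fin 10} (hi : i ≠ 5 ∧ i ≠ 8) : pd g i (middleAxisState b₁ b₂ m n) = 0 := by
    by_cases hi4 : i < 4
    · exact hbal.pd_middleAxisState_eq_zero hg hB hmn h9 hi4
    · refine _root_.pd_middleAxisState_eq_zero hB ?_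
      rintro (rfl | rfl | rfl | rfl) <;> revert hi hi4 <;> decide
  rw [RVF, hpd (i := 0) (by decide), hpd (i := 1) (by decide), hpd (i := 2) (by decide),
    hpd (i := 3) (by decide), hpd (i := 4) (by decide), hpd (i := 6) (by decide),
    hpd (i := 7) (by decide), hpd (i := 9) (by decide)]
  ext i
  fin_cases i <;> simp [middleAxisState]

lemma IsBalanced.liapunovStable_middleAxisState
    (hbal : IsBalanced (2 * π * g) m n (unitVolumeAxes b₁ b₂)) (hg : 0 < g) (hB : memB b₁ b₂)
    (hmn : m * n < 0) (h9 : unitVolumeAxes b₁ b₂ 1 ^ 2 ≤ 9 * unitVolumeAxes b₁ b₂ 2 ^ 2) :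
    LiapunovStable g |m| |n| (middleAxisState b₁ b₂ m n) := by
  intro ε hε
  have hcont : ∀ᶠ p in 𝓝 (middleAxisState b₁ b₂ m n), ContinuousAt (Hred g) p := by
    filter_upwards [memB.eventually (f₁ := fun p : Fin 10 → ℝ ↦ p 0) (f₂ := fun p ↦ p 1) hB
      (continuousAt_apply 0 _) (continuousAt_apply 1 _)] with p hp
      using hp.differentiableAt_Hred.continuousAt
  obtain ⟨δ, hδ, hstable⟩ := exists_forall_dist_lt_of_conserved (isClosed_momentumLevel m n) hcont
    (hbal.eventually_Hred_lt hg hB hmn h9) hε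
  refine ⟨δ, hδ, fun T γ hγ hL hR hdist ↦ ?_⟩
  have h0 : γ 0 ∈ momentumLevel m n := by
    refine ⟨(sum_leftMomentum_sq _).trans ?_, (sum_rightMomentum_sq _).trans ?_⟩
    · rw [← sq_abs m, ← hL, Real.sq_sqrt (by positivity)]
    · rw [← sq_abs n, ← hR, Real.sq_sqrt (by positivity)]
  exact hstable T γ (fun t ht ↦ (hγ.hasDerivAt ht).continuousAt.continuousWithinAt)
    (fun t ht ↦ hγ.mem_momentumLevel h0 ht)
    (fun t ht ↦ eq_of_hasDerivAt_zero_Ico (fun s hs ↦ hγ.hasDerivAt_Hred hs) ht) hdist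

end Dynamics

section CounterParallel

variable {g x y z b₁ b₂ : ℝ}

lemma NSp_add_NSm (g x y z : ℝ) : NSp g x y z + NSm g x y z = √(GSp g x y z) := by
  rw [NSp, NSm]
  ring

lemma NSp_sub_NSm (g x y z : ℝ) : NSp g x y z - NSm g x y z = √(GSm g x y z) := by
  rw [NSp, NSm]
  ring

lemma NSp_pos (hG : 0 < GSm g x y z) : 0 < NSp g x y z :=
  half_pos (add_pos_of_nonneg_of_pos (sqrt_nonneg _) (Real.sqrt_pos.2 hG))

lemma NSm_neg (h0 : 0 ≤ GSp g x y z) (hlt : GSp g x y z < GSm g x y z) : NSm g x y z < 0 :=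
  div_neg_of_neg_of_pos (sub_neg.2 (sqrt_lt_sqrt h0 hlt)) two_pos

lemma memB.isBalanced (hB : memB b₁ b₂) (hp : 0 ≤ GSp g b₁ b₂ (b₁ * b₂)⁻¹)
    (hm : 0 ≤ GSm g b₁ b₂ (b₁ * b₂)⁻¹) :
    IsBalanced (2 * π * g) (NSp g b₁ b₂ (b₁ * b₂)⁻¹) (NSm g b₁ b₂ (b₁ * b₂)⁻¹)
      (unitVolumeAxes b₁ b₂) where
  add_sq := by
    rw [NSp_add_NSm, sq_sqrt hp]
    exact GSp_eq_mul_indexSymbol hB.unitVolumeAxes_pos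
  sub_sq := by
    rw [NSp_sub_NSm, sq_sqrt hm]
    exact GSm_eq_mul_indexSymbol hB.unitVolumeAxes_pos

end CounterParallel

/-- In the counter-parallel `S₂` regime (`0 ≤ G^S₊ < G^S₋`, so `N₋ < 0`),
the point `p* = (b₁,b₂,0,0, 0,N₊,0, 0,N₋,0)` is an equilibrium of the reduced equations and
is Liapunov stable relative to `S_{L,R}` with `L = N₊`, `R = −N₋`. -/
theorem stmt_5 (g b1 b2 b3 : ℝ) (hg : 0 < g) (hB : memB b1 b2) (hb3 : b3 = (b1 * b2)⁻¹)
    (h0 : 0 ≤ GSp g b1 b2 b3) (hlt : GSp g b1 b2 b3 < GSm g b1 b2 b3) :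
    RVF g ![b1, b2, 0, 0, 0, NSp g b1 b2 b3, 0, 0, NSm g b1 b2 b3, 0] = 0 ∧
    LiapunovStable g (NSp g b1 b2 b3) (-(NSm g b1 b2 b3))
      ![b1, b2, 0, 0, 0, NSp g b1 b2 b3, 0, 0, NSm g b1 b2 b3, 0] := by
  subst hb3
  have hp := NSp_pos (h0.trans_lt hlt)
  have hm := NSm_neg h0 hlt
  have hmn := mul_neg_of_pos_of_neg hp hm
  have hbal := hB.isBalanced h0 (h0.trans hlt.le)
  have h9 := sq_le_nine_mul_sq_of_GSm_pos hg hB.minor_pos hB.minor_lt_middle hB.middle_lt_major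
    (h0.trans_lt hlt)
  refine ⟨hbal.RVF_middleAxisState_eq_zero hg hB hmn h9, ?_⟩
  have hstable := hbal.liapunovStable_middleAxisState hg hB hmn h9
  rwa [abs_of_pos hp, abs_of_neg hm] at hstable
end
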